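/- For every dimension n ≥ 1 and every s, t > 0 there exists a sequence of centered probability measures dμ_k = f_k dγ on ℝⁿ (with smooth positive densities having finite Fisher information, finite relative entropy and finite moments of every order) such that, as k → ∞: (1) k^t · δ(μ_k) / log k → st/2; (2) k^t · (H(μ_k) − s·k^{2−t}) / log k → −st/2; (3) the quantity (W_2²(μ_k, γ) − 2s·k^{2−t}) / (k^{1−t}(log k)^{1/2}) stays bounded; (4) k^t · (m_2(μ_k) − m_2(γ) − 2s·k^{2−t}) → (s/4)·m_2(γ) (where m_2(γ) = n); (5) for every p ∈ [1, ∞), s ≤ liminf_{k→∞} k^{t−p}(m_p(μ_k) − m_p(γ)) and limsup_{k→∞} k^{t−p}(m_p(μ_k) − m_p(γ)) ≤ 2^{2(p−1)} s. -/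

import Mathlib

/-!
The densities are symmetric Gaussian mixtures: `μ_k = (1 - w) γ + (w/2) (γ_c + γ_{-c})`, where
`γ_c` is `γ` translated by `c`, the mass is `w = (s/2) k^{-t}` and the translation satisfies
`‖c‖² = 4k² + m₂(γ)/2` (`mixDens`, `wSeq`, `cSeq`). Symmetry makes `μ_k` centered, and
`m₂(μ_k) = m₂(γ) + w ‖c‖²` exactly, which explains the choice of `‖c‖²` in view of (4).

Write the density as `f = 1 - w + w G` with `G = e^{-‖c‖²/2} cosh ⟪c, x⟫`. The two summands live in
almost disjoint regions: `∫ √(w G) dγ` is exponentially small in `‖c‖²`. Hence, up to `O(w)`, the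
entropy is that of `w G` alone, namely `w (log w + ‖c‖²/2)` (`relEnt_mix_bounds`), and the Fisher
information is `w ‖c‖²` up to exponentially small terms (`fisher_mix_bounds`). The terms
`w ‖c‖²/2` cancel in the deficit, which leaves `-w log w ~ (st/2) k^{-t} log k`.

For the Wasserstein distance, translating the two far pieces back costs `w ‖c‖²`, an upper bound.
For the lower bound, any coupling must bring the mass near `±c` into a ball of radius
`R ~ √(log k)` that carries almost all of `γ`; quantitatively, `‖x - y‖²` dominates the sum of a
function of `x` and a function of `y` (`dual_pointwise`) whose integrals depend on the marginals
only (`wasserstein_mix_bounds`).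

Finally `k^{-p} ∫ ‖x + c‖^p dγ → 2^p` by dominated convergence, so the normalised `p`-th moments
converge to `2^{p-1} s`, which lies between `s` and `2^{2(p-1)} s` (`moment_asymp`).
-/

open MeasureTheory Filter Real Topology

noncomputable section

/-- Euclidean space `ℝⁿ`. -/
abbrev En (n : ℕ) := EuclideanSpace ℝ (Fin n)

/-- The standard Gaussian measure `dγ = (2π)^{-n/2} e^{-|x|²/2} dx` on `ℝⁿ`. -/
def stdGauss (n : ℕ) : Measure (En n) :=
  (volume : Measure (En n)).withDensity
    (fun x => ENNReal.ofReal ((2 * π) ^ (-(n : ℝ) / 2) * Real.exp (-‖x‖ ^ 2 / 2)))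

/-- The probability measure `dμ = f dγ` with density `f` with respect to the Gaussian. -/
def densMeasure {n : ℕ} (f : En n → ℝ) : Measure (En n) :=
  (stdGauss n).withDensity (fun x => ENNReal.ofReal (f x))

/-- Relative entropy `H(μ) = ∫ f log f dγ` of `dμ = f dγ`. -/
def relEnt {n : ℕ} (f : En n → ℝ) : ℝ :=
  ∫ x, f x * Real.log (f x) ∂(stdGauss n)

/-- Fisher information `I(μ) = ∫ |∇f|²/f dγ` of `dμ = f dγ`. -/
def fisherInfo {n : ℕ} (f : En n → ℝ) : ℝ :=
  ∫ x, ‖gradient f x‖ ^ 2 / f x ∂(stdGauss n)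

/-- Deficit of the logarithmic Sobolev inequality, `δ(μ) = I(μ)/2 − H(μ)`. -/
def lsiDeficit {n : ℕ} (f : En n → ℝ) : ℝ :=
  fisherInfo f / 2 - relEnt f

/-- The `p`-th moment `m_p(μ) = ∫ |x|^p dμ`. -/
def moment {n : ℕ} (p : ℝ) (μ : Measure (En n)) : ℝ := ∫ x, ‖x‖ ^ p ∂μ

/-- A measure is centered if `∫ x dμ = 0`. -/
def IsCentered {n : ℕ} (μ : Measure (En n)) : Prop := (∫ x, x ∂μ) = 0

/-- `π'` is a coupling of `μ` and `ν`. -/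
def IsCoupling {n : ℕ} (π' : Measure (En n × En n)) (μ ν : Measure (En n)) : Prop :=
  IsProbabilityMeasure π' ∧ π'.map Prod.fst = μ ∧ π'.map Prod.snd = ν

/-- Wasserstein distance of order `p`:
`W_p(μ,ν) = inf_π (∫∫ |x−y|^p dπ)^{1/p}` over couplings `π`. -/
def wasserstein {n : ℕ} (p : ℝ) (μ ν : Measure (En n)) : ℝ :=
  ((⨅ (π' : Measure (En n × En n)) (_ : IsCoupling π' μ ν),
      ∫⁻ z, ENNReal.ofReal (‖z.1 - z.2‖ ^ p) ∂π') ^ (1 / p)).toReal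

/-- Deficit of Talagrand's inequality, `δ_Tal(μ) = 2H(μ) − W₂²(μ,γ)` for `dμ = f dγ`. -/
def talDeficit {n : ℕ} (f : En n → ℝ) : ℝ :=
  2 * relEnt f - wasserstein 2 (densMeasure f) (stdGauss n) ^ 2

/-- The `L^p(dμ)` norm of a real function. -/
def LpNorm {n : ℕ} (p : ℝ) (μ : Measure (En n)) (u : En n → ℝ) : ℝ :=
  (∫ x, |u x| ^ p ∂μ) ^ (1 / p)

/-! ### The standard Gaussian measure -/

lemma gaussDensity_measurable (n : ℕ) : Measurable (fun x : En n =>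
    ENNReal.ofReal ((2 * π) ^ (-(n : ℝ) / 2) * Real.exp (-‖x‖ ^ 2 / 2))) := by
  fun_prop

lemma integrable_gauss_iff {n : ℕ} {F : Type*} [NormedAddCommGroup F] [NormedSpace ℝ F]
    (h : En n → F) : Integrable h (stdGauss n) ↔
      Integrable (fun x : En n =>
        ((2 * π) ^ (-(n : ℝ) / 2) * Real.exp (-‖x‖ ^ 2 / 2)) • h x) := by
  unfold stdGauss
  rw [integrable_withDensity_iff_integrable_smul' (gaussDensity_measurable n)
    (Eventually.of_forall fun _ => ENNReal.ofReal_lt_top)]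
  refine integrable_congr (Eventually.of_forall fun x => ?_)
  simp only
  rw [ENNReal.toReal_ofReal (by positivity)]

lemma integrable_exp_neg_sq {n : ℕ} {b : ℝ} (hb : 0 < b) :
    Integrable (fun x : En n => Real.exp (-b * ‖x‖ ^ 2)) := by
  have h := (GaussianFourier.integrable_cexp_neg_mul_sq_norm_add (V := En n) (b := (b : ℂ))
    (by simpa using hb) 0 0).norm
  refine h.congr (Eventually.of_forall fun x => ?_)
  simp only [Complex.norm_exp]
  congr 1
  simp [← Complex.ofReal_pow]

instance stdGauss_isProb (n : ℕ) : IsProbabilityMeasure (stdGauss n) := by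
  constructor
  unfold stdGauss
  rw [withDensity_apply _ MeasurableSet.univ, Measure.restrict_univ]
  have hi := (integrable_exp_neg_sq (n := n) (b := 1 / 2) (by norm_num)).const_mul
    ((2 * π) ^ (-(n : ℝ) / 2))
  have he : ∀ x : En n, (2 * π) ^ (-(n : ℝ) / 2) * Real.exp (-‖x‖ ^ 2 / 2)
      = (2 * π) ^ (-(n : ℝ) / 2) * Real.exp (-(1 / 2) * ‖x‖ ^ 2) := fun x => by
    congr 2; ring
  simp_rw [he]
  rw [← ofReal_integral_eq_lintegral_ofReal hi (Eventually.of_forall fun x => by positivity),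
    integral_const_mul, GaussianFourier.integral_rexp_neg_mul_sq_norm (by norm_num),
    finrank_euclideanSpace, Fintype.card_fin, show π / (1 / 2) = 2 * π by ring,
    ← Real.rpow_add (by positivity), show -(n : ℝ) / 2 + n / 2 = 0 by ring, Real.rpow_zero,
    ENNReal.ofReal_one]

/-- The integrability claims below are dominations by these functions, whose quadratic exponent
stays under the Gaussian's. -/
lemma integrable_exp_sq {n : ℕ} (a : ℝ) :
    Integrable (fun x : En n => Real.exp (a * ‖x‖ + ‖x‖ ^ 2 / 4)) (stdGauss n) := by
  rw [integrable_gauss_iff]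
  refine Integrable.mono' (((integrable_exp_neg_sq (n := n) (b := 1 / 8)
    (by norm_num)).const_mul (Real.exp (2 * a ^ 2))).const_mul ((2 * π) ^ (-(n : ℝ) / 2)))
    (by fun_prop) (Eventually.of_forall fun x => ?_)
  rw [Real.norm_of_nonneg (by rw [smul_eq_mul]; positivity), smul_eq_mul, mul_assoc,
    ← Real.exp_add, ← Real.exp_add]
  refine mul_le_mul_of_nonneg_left (Real.exp_le_exp.2 ?_) (by positivity)
  nlinarith [sq_nonneg (‖x‖ - 4 * a)]

lemma integrable_of_le_exp {n : ℕ} {F : Type*} [NormedAddCommGroup F]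
    {h : En n → F} (hh : AEStronglyMeasurable h (stdGauss n)) (C a : ℝ)
    (hb : ∀ x, ‖h x‖ ≤ C * Real.exp (a * ‖x‖)) : Integrable h (stdGauss n) := by
  refine Integrable.mono' ((integrable_exp_sq (n := n) a).const_mul C) hh
    (Eventually.of_forall fun x => (hb x).trans ?_)
  have hC : 0 ≤ C := by
    have := (norm_nonneg _).trans (hb 0)
    simpa using this
  gcongr
  linarith [sq_nonneg ‖x‖]

lemma rpow_le_exp {X p : ℝ} (hX : 0 ≤ X) (hp : 0 ≤ p) : X ^ p ≤ Real.exp (p * X) := by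
  rw [mul_comm, Real.exp_mul]
  exact Real.rpow_le_rpow hX (by linarith [Real.add_one_le_exp X]) hp

lemma integrable_norm_rpow_add {n : ℕ} (c : En n) {p : ℝ} (hp : 0 ≤ p) :
    Integrable (fun x : En n => ‖x + c‖ ^ p) (stdGauss n) := by
  refine integrable_of_le_exp ?_ (Real.exp (p * ‖c‖)) p fun x => ?_
  · exact (Continuous.rpow_const (by fun_prop) (fun _ => Or.inr hp)).aestronglyMeasurable
  · rw [Real.norm_of_nonneg (by positivity), ← Real.exp_add]
    refine (rpow_le_exp (norm_nonneg _) hp).trans (Real.exp_le_exp.2 ?_)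
    nlinarith [norm_add_le x c]

/-- Cameron–Martin: translating the Gaussian by `c` amounts to the density
`exp (⟪c, x⟫ - ‖c‖² / 2)`. -/
lemma map_add_gauss {n : ℕ} (c : En n) :
    (stdGauss n).map (fun x => x + c) = (stdGauss n).withDensity
      (fun x => ENNReal.ofReal (Real.exp (inner ℝ c x - ‖c‖ ^ 2 / 2))) := by
  refine Measure.ext_of_lintegral _ fun h hh => ?_
  rw [lintegral_map hh (by fun_prop),
    lintegral_withDensity_eq_lintegral_mul _ (by fun_prop) hh]
  unfold stdGauss
  rw [lintegral_withDensity_eq_lintegral_mul _ (gaussDensity_measurable n) (by fun_prop),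
    lintegral_withDensity_eq_lintegral_mul _ (gaussDensity_measurable n) (by fun_prop)]
  simp only [Pi.mul_apply]
  conv_rhs => rw [← lintegral_add_right_eq_self _ c]
  refine lintegral_congr fun x => ?_
  rw [← mul_assoc, ← ENNReal.ofReal_mul (by positivity), mul_assoc, ← Real.exp_add]
  congr 4
  rw [norm_add_sq_real, inner_add_right, real_inner_self_eq_norm_sq, real_inner_comm c x]
  ring

lemma integral_exp_inner_mul {n : ℕ} (c : En n) (h : En n → ℝ) (hh : Measurable h) :
    ∫ x, Real.exp (inner ℝ c x - ‖c‖ ^ 2 / 2) * h x ∂(stdGauss n)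
      = ∫ x, h (x + c) ∂(stdGauss n) := by
  rw [← integral_map (φ := fun x => x + c) (f := h) (by fun_prop)
      (hh.aestronglyMeasurable), map_add_gauss,
    integral_withDensity_eq_integral_toReal_smul (by fun_prop)
      (Eventually.of_forall fun _ => ENNReal.ofReal_lt_top)]
  refine integral_congr_ae (Eventually.of_forall fun x => ?_)
  simp only
  rw [ENNReal.toReal_ofReal (by positivity), smul_eq_mul]

lemma map_neg_gauss (n : ℕ) : (stdGauss n).map (fun x => -x) = stdGauss n := by
  refine Measure.ext_of_lintegral _ fun h hh => ?_
  rw [lintegral_map hh (by fun_prop)]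
  unfold stdGauss
  rw [lintegral_withDensity_eq_lintegral_mul _ (gaussDensity_measurable n) (by fun_prop),
    lintegral_withDensity_eq_lintegral_mul _ (gaussDensity_measurable n) (by fun_prop)]
  simp only [Pi.mul_apply]
  rw [← lintegral_neg_eq_self]
  refine lintegral_congr fun x => ?_
  simp

lemma integral_neg_gauss {n : ℕ} {F : Type*} [NormedAddCommGroup F] [NormedSpace ℝ F]
    (h : En n → F) : ∫ x, h (-x) ∂(stdGauss n) = ∫ x, h x ∂(stdGauss n) := by
  conv_rhs => rw [← map_neg_gauss n]
  exact (integral_map_equiv (MeasurableEquiv.neg (En n)) h).symm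

lemma integral_inner_gauss {n : ℕ} (c : En n) : ∫ x, inner ℝ c x ∂(stdGauss n) = 0 := by
  have h := integral_neg_gauss (fun x : En n => (inner ℝ c x : ℝ))
  simp only [inner_neg_right, integral_neg] at h
  linarith

/-! ### The symmetric Gaussian mixture -/

/-- Density with respect to `γ` of the mixture `(1 - w) γ + (w / 2) (γ_c + γ_{-c})`, where
`γ_{±c}` is the Gaussian translated by `±c`. -/
def mixDens {n : ℕ} (w : ℝ) (c : En n) (x : En n) : ℝ :=
  1 - w + w * (Real.exp (-‖c‖ ^ 2 / 2) * Real.cosh (inner ℝ c x))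

section
variable {n : ℕ} {w : ℝ} {c : En n}

lemma mixDens_ge (hw0 : 0 ≤ w) (x : En n) : 1 - w ≤ mixDens w c x := by
  unfold mixDens
  have := Real.cosh_pos (inner ℝ c x)
  have : 0 ≤ w * (Real.exp (-‖c‖ ^ 2 / 2) * Real.cosh (inner ℝ c x)) := by positivity
  linarith

lemma mixDens_pos (hw0 : 0 ≤ w) (hw1 : w ≤ 1 / 2) (x : En n) : 0 < mixDens w c x := by
  linarith [mixDens_ge (c := c) hw0 x]

lemma mixDens_contDiff (w : ℝ) (c : En n) : ContDiff ℝ (⊤ : ℕ∞) (mixDens w c) := by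
  unfold mixDens
  have h : ContDiff ℝ (⊤ : ℕ∞) (fun x : En n => Real.cosh (inner ℝ c x)) :=
    Real.contDiff_cosh.comp (contDiff_const.inner ℝ contDiff_id)
  exact contDiff_const.add (contDiff_const.mul (contDiff_const.mul h))

lemma mixDens_measurable (w : ℝ) (c : En n) : Measurable (mixDens w c) :=
  (mixDens_contDiff w c).continuous.measurable

lemma mixDens_neg (w : ℝ) (c x : En n) : mixDens w c (-x) = mixDens w c x := by
  simp [mixDens, inner_neg_right, Real.cosh_neg]

lemma densMeasure_mix (hw0 : 0 ≤ w) (hw1 : w ≤ 1 / 2) :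
    densMeasure (mixDens w c) = ENNReal.ofReal (1 - w) • stdGauss n
      + ENNReal.ofReal (w / 2) • (stdGauss n).map (fun x => x + c)
      + ENNReal.ofReal (w / 2) • (stdGauss n).map (fun x => x + -c) := by
  rw [map_add_gauss, map_add_gauss]
  conv_rhs =>
    lhs; lhs
    rw [show stdGauss n = (stdGauss n).withDensity (fun _ => 1) by
      rw [withDensity_const, one_smul]]
  rw [← withDensity_smul _ (by fun_prop), ← withDensity_smul _ (by fun_prop),
    ← withDensity_smul _ (by fun_prop), ← withDensity_add_left (by fun_prop),
    ← withDensity_add_left (by fun_prop)]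
  unfold densMeasure
  congr 1
  ext x
  simp only [Pi.add_apply, Pi.smul_apply, smul_eq_mul, mul_one, mixDens]
  rw [← ENNReal.ofReal_mul (by positivity), ← ENNReal.ofReal_mul (by positivity),
    ← ENNReal.ofReal_add (by linarith) (by positivity),
    ← ENNReal.ofReal_add (by have : 0 ≤ 1 - w := by linarith
                             positivity) (by positivity)]
  congr 1
  rw [Real.cosh_eq, norm_neg, inner_neg_left, neg_div, sub_eq_add_neg (inner ℝ c x : ℝ),
    sub_eq_add_neg (-inner ℝ c x : ℝ), Real.exp_add, Real.exp_add]
  ring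

lemma densMeasure_mix_isProb (hw0 : 0 ≤ w) (hw1 : w ≤ 1 / 2) :
    IsProbabilityMeasure (densMeasure (mixDens w c)) := by
  constructor
  have h1 : (stdGauss n).map (fun x => x + c) Set.univ = 1 := by
    rw [Measure.map_apply (by fun_prop) MeasurableSet.univ]; simp
  have h2 : (stdGauss n).map (fun x => x + -c) Set.univ = 1 := by
    rw [Measure.map_apply (by fun_prop) MeasurableSet.univ]; simp
  rw [densMeasure_mix hw0 hw1]
  simp only [Measure.add_apply, Measure.smul_apply, h1, h2, measure_univ, smul_eq_mul, mul_one]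
  rw [← ENNReal.ofReal_add (by linarith) (by positivity),
    ← ENNReal.ofReal_add (by linarith) (by positivity),
    show 1 - w + w / 2 + w / 2 = 1 by ring, ENNReal.ofReal_one]

/-- Integrals of even functions against the mixture: by symmetry both translates contribute
equally. -/
lemma integrable_mix (hw0 : 0 ≤ w) (hw1 : w ≤ 1 / 2) {h : En n → ℝ} (hm : Measurable h)
    (heven : ∀ x, h (-x) = h x) (h0 : Integrable h (stdGauss n))
    (h1 : Integrable (fun x => h (x + c)) (stdGauss n)) :
    Integrable h (densMeasure (mixDens w c)) ∧
    ∫ x, h x ∂(densMeasure (mixDens w c))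
      = (1 - w) * ∫ x, h x ∂(stdGauss n) + w * ∫ x, h (x + c) ∂(stdGauss n) := by
  have e : ∀ x, h (x + -c) = h (-x + c) := fun x => by
    rw [← heven (x + -c)]; congr 1; abel
  have h2 : Integrable (fun x => h (x + -c)) (stdGauss n) := by
    simp_rw [e]
    have := h1
    rw [← map_neg_gauss n] at this
    exact this.comp_measurable (by fun_prop)
  have e2 : ∫ x, h (x + -c) ∂(stdGauss n) = ∫ x, h (x + c) ∂(stdGauss n) := by
    simp_rw [e]
    exact integral_neg_gauss (fun x => h (x + c))
  have i1 : Integrable h ((stdGauss n).map (fun x => x + c)) :=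
    (integrable_map_measure hm.aestronglyMeasurable (by fun_prop)).2 h1
  have i2 : Integrable h ((stdGauss n).map (fun x => x + -c)) :=
    (integrable_map_measure hm.aestronglyMeasurable (by fun_prop)).2 h2
  rw [densMeasure_mix hw0 hw1]
  have j0 := h0.smul_measure (c := ENNReal.ofReal (1 - w)) ENNReal.ofReal_ne_top
  have j1 := i1.smul_measure (c := ENNReal.ofReal (w / 2)) ENNReal.ofReal_ne_top
  have j2 := i2.smul_measure (c := ENNReal.ofReal (w / 2)) ENNReal.ofReal_ne_top
  refine ⟨(j0.add_measure j1).add_measure j2, ?_⟩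
  rw [integral_add_measure (j0.add_measure j1) j2, integral_add_measure j0 j1,
    integral_smul_measure, integral_smul_measure, integral_smul_measure,
    integral_map (by fun_prop) hm.aestronglyMeasurable,
    integral_map (by fun_prop) hm.aestronglyMeasurable, e2,
    ENNReal.toReal_ofReal (by linarith), ENNReal.toReal_ofReal (by linarith)]
  simp only [smul_eq_mul]
  ring

lemma densMeasure_mix_centered (w : ℝ) (c : En n) :
    IsCentered (densMeasure (mixDens w c)) := by
  unfold IsCentered densMeasure
  rw [integral_withDensity_eq_integral_toReal_smul
    (mixDens_measurable w c).ennreal_ofReal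
    (Eventually.of_forall fun _ => ENNReal.ofReal_lt_top)]
  have h := integral_neg_gauss
    (fun x : En n => (ENNReal.ofReal (mixDens w c x)).toReal • x)
  simp only [mixDens_neg, smul_neg, integral_neg] at h
  have h2 := neg_eq_iff_add_eq_zero.1 h
  rw [← two_smul ℝ] at h2
  exact (smul_eq_zero.1 h2).resolve_left two_ne_zero

/-! ### Gaussian integrals of hyperbolic functions of `⟪c, x⟫` -/

lemma abs_inner_le (x : En n) : |inner ℝ c x| ≤ ‖c‖ * ‖x‖ := abs_real_inner_le_norm c x

lemma cosh_le_exp_abs (u : ℝ) : Real.cosh u ≤ Real.exp |u| := by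
  rw [Real.cosh_eq]
  linarith [Real.exp_le_exp.2 (le_abs_self u), Real.exp_le_exp.2 (neg_le_abs u)]

lemma integrable_cosh (K : ℝ) (c : En n) :
    Integrable (fun x : En n => K * Real.cosh (inner ℝ c x)) (stdGauss n) := by
  refine Integrable.const_mul ?_ K
  refine integrable_of_le_exp
    (Real.continuous_cosh.comp (by fun_prop)).aestronglyMeasurable 1 ‖c‖ fun x => ?_
  rw [Real.norm_of_nonneg (Real.cosh_pos _).le, one_mul]
  exact (cosh_le_exp_abs _).trans (Real.exp_le_exp.2 (abs_inner_le x))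

lemma integrable_inner_mul_exp (c : En n) :
    Integrable (fun x : En n => Real.exp (inner ℝ c x - ‖c‖ ^ 2 / 2) * inner ℝ c x)
      (stdGauss n) := by
  refine integrable_of_le_exp (by fun_prop) 1 (2 * ‖c‖) fun x => ?_
  rw [norm_mul, Real.norm_of_nonneg (by positivity), Real.norm_eq_abs, one_mul, two_mul, add_mul,
    Real.exp_add]
  have h1 := abs_inner_le (c := c) x
  have h2 := le_abs_self (inner ℝ c x)
  have h3 := Real.add_one_le_exp (‖c‖ * ‖x‖)
  refine mul_le_mul (Real.exp_le_exp.2 ?_) (by linarith) (abs_nonneg _) (by positivity)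
  nlinarith [sq_nonneg ‖c‖]

lemma integral_exp_inner (c : En n) :
    ∫ x, Real.exp (inner ℝ c x - ‖c‖ ^ 2 / 2) ∂(stdGauss n) = 1 := by
  have := integral_exp_inner_mul c (fun _ => 1) measurable_const
  simpa using this

lemma integral_inner_mul_exp (c : En n) :
    ∫ x, Real.exp (inner ℝ c x - ‖c‖ ^ 2 / 2) * inner ℝ c x ∂(stdGauss n) = ‖c‖ ^ 2 := by
  rw [integral_exp_inner_mul c (fun x => inner ℝ c x) (by fun_prop)]
  simp_rw [inner_add_right, real_inner_self_eq_norm_sq]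
  have hi : Integrable (fun x : En n => (inner ℝ c x : ℝ)) (stdGauss n) := by
    refine integrable_of_le_exp (by fun_prop) 1 ‖c‖ fun x => ?_
    have h1 := abs_inner_le (c := c) x
    have h3 := Real.add_one_le_exp (‖c‖ * ‖x‖)
    rw [Real.norm_eq_abs]
    linarith
  rw [integral_add hi (integrable_const _), integral_inner_gauss]
  simp

lemma integral_cosh (c : En n) :
    ∫ x, Real.exp (-‖c‖ ^ 2 / 2) * Real.cosh (inner ℝ c x) ∂(stdGauss n) = 1 := by
  have hi : ∀ d : En n,
      Integrable (fun x : En n => Real.exp (inner ℝ d x - ‖d‖ ^ 2 / 2)) (stdGauss n) := by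
    intro d
    refine integrable_of_le_exp (by fun_prop) 1 ‖d‖ fun x => ?_
    rw [Real.norm_of_nonneg (by positivity), one_mul]
    have h1 := (le_abs_self _).trans (abs_inner_le (c := d) x)
    exact Real.exp_le_exp.2 (by nlinarith [sq_nonneg ‖d‖])
  have e : ∀ x : En n, Real.exp (-‖c‖ ^ 2 / 2) * Real.cosh (inner ℝ c x)
      = (Real.exp (inner ℝ c x - ‖c‖ ^ 2 / 2)
        + Real.exp (inner ℝ (-c) x - ‖-c‖ ^ 2 / 2)) / 2 := fun x => by
    rw [Real.cosh_eq, norm_neg, inner_neg_left, neg_div, sub_eq_add_neg (inner ℝ c x : ℝ),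
      sub_eq_add_neg (-inner ℝ c x : ℝ), Real.exp_add, Real.exp_add]
    ring
  simp_rw [e]
  rw [integral_div, integral_add (hi c) (hi (-c)), integral_exp_inner, integral_exp_inner]
  norm_num

lemma integral_cosh_half (c : En n) :
    ∫ x, Real.exp (-‖c‖ ^ 2 / 4) * Real.cosh (inner ℝ c x / 2) ∂(stdGauss n)
      = Real.exp (-‖c‖ ^ 2 / 8) := by
  have h := integral_cosh ((1 / 2 : ℝ) • c)
  have e : ∀ x : En n, Real.exp (-‖c‖ ^ 2 / 4) * Real.cosh (inner ℝ c x / 2)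
      = Real.exp (-‖c‖ ^ 2 / 8) * (Real.exp (-‖(1 / 2 : ℝ) • c‖ ^ 2 / 2)
        * Real.cosh (inner ℝ ((1 / 2 : ℝ) • c) x)) := fun x => by
    rw [← mul_assoc, ← Real.exp_add, norm_smul, inner_smul_left]
    congr 2
    · norm_num
      ring
    · simp
      ring
  simp_rw [e]
  rw [integral_const_mul, h, mul_one]

lemma integrable_cosh_half (c : En n) :
    Integrable (fun x : En n => Real.exp (-‖c‖ ^ 2 / 4) * Real.cosh (inner ℝ c x / 2))
      (stdGauss n) := by
  refine (integrable_cosh (Real.exp (-‖c‖ ^ 2 / 4)) ((1 / 2 : ℝ) • c)).congr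
    (Eventually.of_forall fun x => ?_)
  simp only [inner_smul_left]
  congr 2
  simp
  ring

lemma integral_inner_mul_sinh (c : En n) :
    Integrable (fun x : En n => Real.exp (-‖c‖ ^ 2 / 2) *
      (inner ℝ c x * Real.sinh (inner ℝ c x))) (stdGauss n) ∧
    ∫ x, Real.exp (-‖c‖ ^ 2 / 2) * (inner ℝ c x * Real.sinh (inner ℝ c x)) ∂(stdGauss n)
      = ‖c‖ ^ 2 := by
  have e : ∀ x : En n, Real.exp (-‖c‖ ^ 2 / 2) * (inner ℝ c x * Real.sinh (inner ℝ c x))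
      = (Real.exp (inner ℝ c x - ‖c‖ ^ 2 / 2) * inner ℝ c x
        + Real.exp (inner ℝ (-c) x - ‖-c‖ ^ 2 / 2) * inner ℝ (-c) x) / 2 := fun x => by
    rw [Real.sinh_eq, norm_neg, inner_neg_left, neg_div, sub_eq_add_neg (inner ℝ c x : ℝ),
      sub_eq_add_neg (-inner ℝ c x : ℝ), Real.exp_add, Real.exp_add]
    ring
  simp_rw [e]
  refine ⟨((integrable_inner_mul_exp c).add (integrable_inner_mul_exp (-c))).div_const 2, ?_⟩
  rw [integral_div, integral_add (integrable_inner_mul_exp c) (integrable_inner_mul_exp (-c)),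
    integral_inner_mul_exp, integral_inner_mul_exp, norm_neg]
  ring

lemma integral_mixDens (w : ℝ) (c : En n) :
    Integrable (mixDens w c) (stdGauss n) ∧ ∫ x, mixDens w c x ∂(stdGauss n) = 1 := by
  unfold mixDens
  have h := (integrable_cosh (Real.exp (-‖c‖ ^ 2 / 2)) c).const_mul w
  refine ⟨(integrable_const _).add h, ?_⟩
  rw [integral_add (integrable_const _) h, integral_const_mul, integral_cosh]
  simp

end

/-! ### Pointwise bounds for the entropy and Fisher integrands

Throughout, `G = e^{-B/2} cosh u` and `Q = e^{-B/4} cosh (u/2)`, to be used with `B = ‖c‖²` and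
`u = ⟪c, x⟫`, so that `mixDens w c x = 1 - w + w G`. -/

lemma cosh_mul_log_cosh_le (u : ℝ) :
    Real.cosh u * Real.log (Real.cosh u) ≤ u * Real.sinh u := by
  have hm := Real.cosh_pos u
  have key : ∀ v : ℝ, Real.exp v - Real.cosh u ≤ Real.exp v * (v - Real.log (Real.cosh u)) := by
    intro v
    have h := Real.one_sub_inv_le_log_of_pos (x := Real.exp v / Real.cosh u) (by positivity)
    rw [Real.log_div (by positivity) hm.ne', Real.log_exp, inv_div] at h
    have h2 := mul_le_mul_of_nonneg_left h (Real.exp_pos v).le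
    have e : Real.exp v * (1 - Real.cosh u / Real.exp v) = Real.exp v - Real.cosh u := by
      field_simp
    linarith
  have h1 := key u
  have h2 := key (-u)
  have hc := Real.cosh_eq u
  have hs := Real.sinh_eq u
  have e1 : Real.exp u + Real.exp (-u) = 2 * Real.cosh u := by linarith
  have e2 : u * Real.exp u - u * Real.exp (-u) = 2 * (u * Real.sinh u) := by rw [hs]; ring
  have e3 : Real.exp u * Real.log (Real.cosh u) + Real.exp (-u) * Real.log (Real.cosh u)
    = 2 * (Real.cosh u * Real.log (Real.cosh u)) := by rw [← add_mul, e1]; ring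
  nlinarith

lemma le_cosh_mul_log_cosh (u : ℝ) :
    u * Real.sinh u - Real.log 2 * Real.cosh u ≤ Real.cosh u * Real.log (Real.cosh u) := by
  have hm := Real.cosh_pos u
  have h1 : |u| - Real.log 2 ≤ Real.log (Real.cosh u) := by
    rw [Real.le_log_iff_exp_le hm, Real.exp_sub, Real.exp_log two_pos, ← Real.cosh_abs,
      Real.cosh_eq]
    linarith [Real.exp_pos (-|u|)]
  have h2 : u * Real.sinh u ≤ |u| * Real.cosh u := by
    rw [← Real.cosh_abs]
    refine (le_abs_self _).trans ?_
    rw [abs_mul, Real.abs_sinh]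
    exact mul_le_mul_of_nonneg_left (Real.sinh_lt_cosh _).le (abs_nonneg _)
  nlinarith

lemma log_weighted {w B u : ℝ} (hw : 0 < w) :
    Real.log (w * (Real.exp (-B / 2) * Real.cosh u))
      = Real.log w + (-B / 2 + Real.log (Real.cosh u)) := by
  have hm := Real.cosh_pos u
  rw [Real.log_mul hw.ne' (by positivity), Real.log_mul (by positivity) hm.ne', Real.log_exp]

lemma sqrt_weighted_le {w B u : ℝ} (hw : 0 ≤ w) :
    √(w * (Real.exp (-B / 2) * Real.cosh u))
      ≤ 2 * (√w * (Real.exp (-B / 4) * Real.cosh (u / 2))) := by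
  have hm := Real.cosh_pos (u / 2)
  refine Real.sqrt_le_iff.2 ⟨by positivity, ?_⟩
  rw [mul_pow, mul_pow, mul_pow, Real.sq_sqrt hw, ← Real.exp_nat_mul]
  have e : ((2 : ℕ) : ℝ) * (-B / 4) = -B / 2 := by push_cast; ring
  rw [e]
  have h2 : Real.cosh u ≤ 2 ^ 2 * Real.cosh (u / 2) ^ 2 := by
    have := Real.cosh_two_mul (u / 2)
    have h3 := Real.cosh_sq (u / 2)
    rw [show 2 * (u / 2) = u by ring] at this
    nlinarith
  calc w * (Real.exp (-B / 2) * Real.cosh u)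
      ≤ w * (Real.exp (-B / 2) * (2 ^ 2 * Real.cosh (u / 2) ^ 2)) := by gcongr
    _ = _ := by ring

/-- The logarithm of the sum `1 - w + w G` is at least the logarithm of each summand. -/
lemma entropy_lower {w B u : ℝ} (hw : 0 < w) (hw1 : w ≤ 1 / 2) :
    -w + w * (Real.log w * (Real.exp (-B / 2) * Real.cosh u)
        + Real.exp (-B / 2) * (u * Real.sinh u)
        - (Real.log 2 + B / 2) * (Real.exp (-B / 2) * Real.cosh u))
      ≤ (1 - w + w * (Real.exp (-B / 2) * Real.cosh u))
        * Real.log (1 - w + w * (Real.exp (-B / 2) * Real.cosh u)) := by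
  have hm := Real.cosh_pos u
  have hG : 0 < w * (Real.exp (-B / 2) * Real.cosh u) := by positivity
  have h1 := le_cosh_mul_log_cosh u
  have h2 : Real.log (w * (Real.exp (-B / 2) * Real.cosh u))
      ≤ Real.log (1 - w + w * (Real.exp (-B / 2) * Real.cosh u)) :=
    Real.log_le_log hG (by linarith)
  have h3 : Real.log (1 - w) ≤ Real.log (1 - w + w * (Real.exp (-B / 2) * Real.cosh u)) :=
    Real.log_le_log (by linarith) (by linarith)
  have h4 : -w ≤ (1 - w) * Real.log (1 - w) := by
    have := Real.one_sub_inv_le_log_of_pos (x := 1 - w) (by linarith)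
    have h5 := mul_le_mul_of_nonneg_left this (show 0 ≤ 1 - w by linarith)
    have e : (1 - w) * (1 - (1 - w)⁻¹) = -w := by
      have : 1 - w ≠ 0 := by linarith
      field_simp
      ring
    linarith
  rw [log_weighted hw] at h2
  set L := Real.log (1 - w + w * (Real.exp (-B / 2) * Real.cosh u))
  have h5 := mul_le_mul_of_nonneg_left h2 hG.le
  have h6 := mul_le_mul_of_nonneg_left h3 (show 0 ≤ 1 - w by linarith)
  have h7 := mul_le_mul_of_nonneg_left h1 (show 0 ≤ w * Real.exp (-B / 2) by positivity)
  linarith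

/-- The entropy integrand exceeds that of the summand `w G` alone by at most a linear term of
integral zero and a multiple of `√w Q`, whose integral is exponentially small in `B`. -/
lemma entropy_upper {w B u : ℝ} (hw : 0 < w) (hw1 : w ≤ 1 / 2) :
    (1 - w + w * (Real.exp (-B / 2) * Real.cosh u))
        * Real.log (1 - w + w * (Real.exp (-B / 2) * Real.cosh u))
      ≤ (1 - w) * ((1 - w + w * (Real.exp (-B / 2) * Real.cosh u)) - 1)
        + w * (Real.log w * (Real.exp (-B / 2) * Real.cosh u)
        + Real.exp (-B / 2) * (u * Real.sinh u)
        - B / 2 * (Real.exp (-B / 2) * Real.cosh u))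
        + 4 * (√w * (Real.exp (-B / 4) * Real.cosh (u / 2))) := by
  have hm := Real.cosh_pos u
  have hG : 0 < w * (Real.exp (-B / 2) * Real.cosh u) := by positivity
  have h1 := cosh_mul_log_cosh_le u
  have hq := sqrt_weighted_le (w := w) (B := B) (u := u) hw.le
  have hl := log_weighted (B := B) (u := u) hw
  have h7 := mul_le_mul_of_nonneg_left h1 (show 0 ≤ w * Real.exp (-B / 2) by positivity)
  have hf := Real.log_le_sub_one_of_pos
    (show 0 < 1 - w + w * (Real.exp (-B / 2) * Real.cosh u) by linarith)
  have h8 := mul_le_mul_of_nonneg_left hf (show 0 ≤ 1 - w by linarith)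
  -- With `a = √(w G)`, the density is at most `(1 + a)²`, so `log f ≤ log (a²) + 2 / a`.
  set A := w * (Real.exp (-B / 2) * Real.cosh u) with hA
  have ha : 0 < √A := Real.sqrt_pos.2 hG
  have hsq : √A ^ 2 = A := Real.sq_sqrt hG.le
  have h9 : Real.log (1 - w + A) ≤ Real.log A + 2 / √A := by
    calc Real.log (1 - w + A) ≤ Real.log ((√A * (1 + 1 / √A)) ^ 2) := by
          refine Real.log_le_log (by linarith) ?_
          have : √A * (1 + 1 / √A) = √A + 1 := by field_simp
          rw [this]
          nlinarith
      _ = Real.log A + 2 * Real.log (1 + 1 / √A) := by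
          rw [mul_pow, Real.log_mul (by positivity) (by positivity), hsq, Real.log_pow]
          norm_num
      _ ≤ Real.log A + 2 * (1 / √A) := by
          have := Real.log_le_sub_one_of_pos (show 0 < 1 + 1 / √A by positivity)
          linarith
      _ = _ := by ring
  have h10 := mul_le_mul_of_nonneg_left h9 hG.le
  have e : A * (Real.log A + 2 / √A) = A * Real.log A + 2 * √A := by
    have : A * (2 / √A) = 2 * √A := by
      rw [mul_div_assoc', div_eq_iff ha.ne']
      linarith
    rw [mul_add, this]
  rw [e, hl] at h10
  have h11 : A * (Real.log w + (-B / 2 + Real.log (Real.cosh u)))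
      = w * (Real.log w * (Real.exp (-B / 2) * Real.cosh u)
        - B / 2 * (Real.exp (-B / 2) * Real.cosh u))
        + w * Real.exp (-B / 2) * (Real.cosh u * Real.log (Real.cosh u)) := by
    rw [hA]; ring
  rw [h11] at h10
  linarith

lemma fisher_upper {w B u : ℝ} (hw : 0 < w) (hw1 : w ≤ 1 / 2) :
    (w * Real.exp (-B / 2) * Real.sinh u) ^ 2 / (1 - w + w * (Real.exp (-B / 2) * Real.cosh u))
      ≤ w * (Real.exp (-B / 2) * Real.cosh u) := by
  have hm := Real.cosh_pos u
  have hG : 0 < w * (Real.exp (-B / 2) * Real.cosh u) := by positivity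
  rw [div_le_iff₀ (by linarith)]
  have e : (w * Real.exp (-B / 2) * Real.sinh u) ^ 2
      = (w * (Real.exp (-B / 2) * Real.cosh u)) ^ 2 - (w * Real.exp (-B / 2)) ^ 2 := by
    have := Real.cosh_sq u
    rw [mul_pow, show Real.sinh u ^ 2 = Real.cosh u ^ 2 - 1 by linarith]
    ring
  nlinarith [sq_nonneg (w * Real.exp (-B / 2)), mul_nonneg hG.le (show 0 ≤ 1 - w by linarith)]

/-- Replacing `sinh²` by `cosh²` and dropping `1 - w` from the denominator changes the Fisher
integrand by terms whose integrals are exponentially small in `B`. -/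
lemma fisher_lower {w B u : ℝ} (hw : 0 < w) (hw1 : w ≤ 1 / 2) :
    w * (Real.exp (-B / 2) * Real.cosh u)
        - 2 * (√w * (Real.exp (-B / 4) * Real.cosh (u / 2)))
        - 2 * (w * Real.exp (-B / 2)) ^ 2
      ≤ (w * Real.exp (-B / 2) * Real.sinh u) ^ 2
        / (1 - w + w * (Real.exp (-B / 2) * Real.cosh u)) := by
  have hm := Real.cosh_pos u
  have hG : 0 < w * (Real.exp (-B / 2) * Real.cosh u) := by positivity
  have hq := sqrt_weighted_le (w := w) (B := B) (u := u) hw.le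
  have e : (w * Real.exp (-B / 2) * Real.sinh u) ^ 2
      = (w * (Real.exp (-B / 2) * Real.cosh u)) ^ 2 - (w * Real.exp (-B / 2)) ^ 2 := by
    have := Real.cosh_sq u
    rw [mul_pow, show Real.sinh u ^ 2 = Real.cosh u ^ 2 - 1 by linarith]
    ring
  rw [e]
  set A := w * (Real.exp (-B / 2) * Real.cosh u) with hA
  have ha : 0 < √A := Real.sqrt_pos.2 hG
  have hsq : √A ^ 2 = A := Real.sq_sqrt hG.le
  have hD : 0 ≤ (w * Real.exp (-B / 2)) ^ 2 := sq_nonneg _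
  set D := (w * Real.exp (-B / 2)) ^ 2
  have h1 : A - √A - 2 * D ≤ (A ^ 2 - D) / (1 - w + A) := by
    rw [le_div_iff₀ (by linarith)]
    -- this inequality, times `√A`, says `(1 - w) A ≤ √A (1 - w + A)`
    have h2 : (1 - w) * √A ≤ 1 - w + A := by
      nlinarith [sq_nonneg (√A - 1 / 2), mul_nonneg ha.le hw.le]
    have h3 := mul_le_mul_of_nonneg_left h2 ha.le
    nlinarith [mul_nonneg hD hG.le, mul_nonneg hD (show 0 ≤ 1 / 2 - w by linarith)]
  linarith

/-! ### Entropy and Fisher information of the mixture -/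

section
variable {n : ℕ} {w : ℝ} {c : En n}

lemma mixDens_le (hw0 : 0 ≤ w) (hw1 : w ≤ 1 / 2) (x : En n) :
    mixDens w c x ≤ 2 * Real.exp (‖c‖ * ‖x‖) := by
  unfold mixDens
  have h1 := (cosh_le_exp_abs (inner ℝ c x)).trans (Real.exp_le_exp.2 (abs_inner_le x))
  have h2 : Real.exp (-‖c‖ ^ 2 / 2) ≤ 1 := Real.exp_le_one_iff.2 (by nlinarith [sq_nonneg ‖c‖])
  have h3 : 1 ≤ Real.exp (‖c‖ * ‖x‖) := Real.one_le_exp (by positivity)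
  have h4 : Real.exp (-‖c‖ ^ 2 / 2) * Real.cosh (inner ℝ c x) ≤ 1 * Real.exp (‖c‖ * ‖x‖) :=
    mul_le_mul h2 h1 (Real.cosh_pos _).le zero_le_one
  have h5 := mul_le_mul hw1 h4
    (mul_nonneg (Real.exp_pos _).le (Real.cosh_pos _).le) (by norm_num)
  linarith

lemma integrable_mixDens_mul_log (hw0 : 0 ≤ w) (hw1 : w ≤ 1 / 2) :
    Integrable (fun x => mixDens w c x * Real.log (mixDens w c x)) (stdGauss n) := by
  have hm := mixDens_measurable w c
  refine integrable_of_le_exp (hm.mul hm.log).aestronglyMeasurable 6 (2 * ‖c‖) fun x => ?_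
  have hf := mixDens_pos (c := c) hw0 hw1 x
  have hl := mixDens_le (c := c) hw0 hw1 x
  have hg := mixDens_ge (c := c) hw0 x
  have h3 : 1 ≤ Real.exp (‖c‖ * ‖x‖) := Real.one_le_exp (by positivity)
  set f := mixDens w c x
  have e : Real.exp (2 * ‖c‖ * ‖x‖) = Real.exp (‖c‖ * ‖x‖) ^ 2 := by
    rw [← Real.exp_nat_mul]; push_cast; ring_nf
  have h1 := Real.log_le_sub_one_of_pos hf
  have h2 := Real.one_sub_inv_le_log_of_pos hf
  have h4 : f⁻¹ ≤ 2 := by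
    rw [inv_le_comm₀ hf two_pos]; linarith
  rw [norm_mul, Real.norm_of_nonneg hf.le, Real.norm_eq_abs, e]
  have h5 : |Real.log f| ≤ f + 1 := abs_le.2 ⟨by linarith, by linarith⟩
  calc f * |Real.log f| ≤ f * (f + 1) := by gcongr
    _ ≤ (2 * Real.exp (‖c‖ * ‖x‖)) * (2 * Real.exp (‖c‖ * ‖x‖) + 1) := by gcongr
    _ ≤ _ := by nlinarith

lemma relEnt_mix_bounds (hw0 : 0 < w) (hw1 : w ≤ 1 / 2) :
    -w + w * (Real.log w + ‖c‖ ^ 2 / 2 - Real.log 2) ≤ relEnt (mixDens w c) ∧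
    relEnt (mixDens w c)
      ≤ w * (Real.log w + ‖c‖ ^ 2 / 2) + 4 * (√w * Real.exp (-‖c‖ ^ 2 / 8)) := by
  have hi := integrable_mixDens_mul_log (c := c) hw0.le hw1
  have iG := integrable_cosh (Real.exp (-‖c‖ ^ 2 / 2)) c
  have jG := integral_cosh c
  obtain ⟨iS, jS⟩ := integral_inner_mul_sinh c
  have iQ := integrable_cosh_half c
  have jQ := integral_cosh_half c
  obtain ⟨iF, jF⟩ := integral_mixDens w c
  have jG' : ∀ K : ℝ, ∫ x, K * (Real.exp (-‖c‖ ^ 2 / 2) * Real.cosh (inner ℝ c x)) ∂(stdGauss n)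
      = K := fun K => by
    rw [integral_const_mul, jG, mul_one]
  have iM : ∀ K : ℝ, Integrable (fun x : En n =>
      w * (Real.log w * (Real.exp (-‖c‖ ^ 2 / 2) * Real.cosh (inner ℝ c x))
        + Real.exp (-‖c‖ ^ 2 / 2) * (inner ℝ c x * Real.sinh (inner ℝ c x))
        - K * (Real.exp (-‖c‖ ^ 2 / 2) * Real.cosh (inner ℝ c x)))) (stdGauss n) := fun K =>
    (((iG.const_mul _).add iS).sub (iG.const_mul _)).const_mul _
  have jM : ∀ K : ℝ, ∫ x : En n,
      w * (Real.log w * (Real.exp (-‖c‖ ^ 2 / 2) * Real.cosh (inner ℝ c x))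
        + Real.exp (-‖c‖ ^ 2 / 2) * (inner ℝ c x * Real.sinh (inner ℝ c x))
        - K * (Real.exp (-‖c‖ ^ 2 / 2) * Real.cosh (inner ℝ c x))) ∂(stdGauss n)
      = w * (Real.log w + ‖c‖ ^ 2 - K) := fun K => by
    have := integral_sub ((iG.const_mul (Real.log w)).add iS) (iG.const_mul K)
    simp only [Pi.add_apply] at this
    rw [integral_const_mul, this, integral_add (iG.const_mul _) iS, jG', jG', jS]
  unfold relEnt
  constructor
  · have h := integral_mono ((integrable_const (-w)).add (iM _)) hi
      (fun x => entropy_lower (w := w) (B := ‖c‖ ^ 2) (u := inner ℝ c x) hw0 hw1)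
    refine le_trans (le_of_eq ?_) h
    simp only [Pi.add_apply]
    rw [integral_add (integrable_const (-w)) (iM _), jM]
    simp only [integral_const, probReal_univ, one_smul]
    ring
  · have i1 : Integrable (fun x => (1 - w) * (mixDens w c x - 1)) (stdGauss n) :=
      (iF.sub (integrable_const 1)).const_mul _
    have i2 : Integrable (fun x : En n => 4 * (√w * (Real.exp (-‖c‖ ^ 2 / 4)
      * Real.cosh (inner ℝ c x / 2)))) (stdGauss n) := (iQ.const_mul _).const_mul _
    have h := integral_mono hi ((i1.add (iM _)).add i2)
      (fun x => entropy_upper (w := w) (B := ‖c‖ ^ 2) (u := inner ℝ c x) hw0 hw1)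
    refine h.trans (le_of_eq ?_)
    simp only [Pi.add_apply]
    have := integral_add (i1.add (iM (‖c‖ ^ 2 / 2))) i2
    simp only [Pi.add_apply] at this
    rw [this, integral_add i1 (iM _), jM, integral_const_mul, integral_const_mul,
      integral_const_mul, integral_sub iF (integrable_const 1), jF, jQ]
    simp only [integral_const, probReal_univ, one_smul]
    ring

lemma gradient_mixDens (w : ℝ) (c x : En n) :
    gradient (mixDens w c) x
      = (w * Real.exp (-‖c‖ ^ 2 / 2) * Real.sinh (inner ℝ c x)) • c := by
  refine HasGradientAt.gradient ?_
  rw [hasGradientAt_iff_hasFDerivAt]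
  have h1 : HasFDerivAt (fun x : En n => (inner ℝ c x : ℝ)) (innerSL ℝ c) x :=
    (innerSL ℝ c).hasFDerivAt
  have h2 := (Real.hasDerivAt_cosh (inner ℝ c x)).comp_hasFDerivAt x h1
  have h3 := ((h2.const_mul (Real.exp (-‖c‖ ^ 2 / 2))).const_mul w).const_add (1 - w)
  refine h3.congr_fderiv ?_
  ext y
  simp
  ring

lemma fisher_integrand_eq (w : ℝ) (c x : En n) :
    ‖gradient (mixDens w c) x‖ ^ 2 / mixDens w c x
      = ‖c‖ ^ 2 * ((w * Real.exp (-‖c‖ ^ 2 / 2) * Real.sinh (inner ℝ c x)) ^ 2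
        / (1 - w + w * (Real.exp (-‖c‖ ^ 2 / 2) * Real.cosh (inner ℝ c x)))) := by
  rw [gradient_mixDens, norm_smul, mul_pow, Real.norm_eq_abs, sq_abs]
  unfold mixDens
  ring

lemma integrable_fisher (hw0 : 0 ≤ w) (hw1 : w ≤ 1 / 2) :
    Integrable (fun x => ‖gradient (mixDens w c) x‖ ^ 2 / mixDens w c x) (stdGauss n) := by
  simp_rw [fisher_integrand_eq]
  rcases hw0.eq_or_lt with rfl | hw
  · simp
  refine Integrable.const_mul ?_ _
  refine Integrable.mono' ((integrable_cosh (Real.exp (-‖c‖ ^ 2 / 2)) c).const_mul w) ?_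
    (Eventually.of_forall fun x => ?_)
  · refine Measurable.aestronglyMeasurable ?_
    have h1 : Measurable (fun x : En n => Real.cosh (inner ℝ c x)) :=
      Real.measurable_cosh.comp (by fun_prop)
    have h2 : Measurable (fun x : En n => Real.sinh (inner ℝ c x)) :=
      Real.measurable_sinh.comp (by fun_prop)
    fun_prop
  · rw [Real.norm_of_nonneg]
    · exact fisher_upper hw hw1
    · have := mixDens_pos (c := c) hw0 hw1 x
      unfold mixDens at this
      positivity

lemma fisher_mix_bounds (hw0 : 0 < w) (hw1 : w ≤ 1 / 2) :
    ‖c‖ ^ 2 * (w - 2 * (√w * Real.exp (-‖c‖ ^ 2 / 8)) - 2 * (w * Real.exp (-‖c‖ ^ 2 / 2)) ^ 2)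
      ≤ fisherInfo (mixDens w c) ∧ fisherInfo (mixDens w c) ≤ ‖c‖ ^ 2 * w := by
  have hi := integrable_fisher (c := c) hw0.le hw1
  have iG := integrable_cosh (Real.exp (-‖c‖ ^ 2 / 2)) c
  have jG := integral_cosh c
  have iQ := integrable_cosh_half c
  have jQ := integral_cosh_half c
  have jG' : ∫ x, w * (Real.exp (-‖c‖ ^ 2 / 2) * Real.cosh (inner ℝ c x)) ∂(stdGauss n) = w := by
    rw [integral_const_mul, jG, mul_one]
  unfold fisherInfo
  simp_rw [fisher_integrand_eq] at hi ⊢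
  constructor
  · have h := integral_mono ((((iG.const_mul w).sub ((iQ.const_mul (√w)).const_mul 2)).sub
        (integrable_const (2 * (w * Real.exp (-‖c‖ ^ 2 / 2)) ^ 2))).const_mul (‖c‖ ^ 2)) hi
      (fun x => mul_le_mul_of_nonneg_left
        (fisher_lower (w := w) (B := ‖c‖ ^ 2) (u := inner ℝ c x) hw0 hw1) (by positivity))
    refine le_trans (le_of_eq ?_) h
    simp only [Pi.sub_apply]
    have := integral_sub ((iG.const_mul w).sub ((iQ.const_mul (√w)).const_mul 2))
      (integrable_const (2 * (w * Real.exp (-‖c‖ ^ 2 / 2)) ^ 2))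
    simp only [Pi.sub_apply] at this
    rw [integral_const_mul, this,
      integral_sub (iG.const_mul w) ((iQ.const_mul (√w)).const_mul 2),
      jG', integral_const_mul, integral_const_mul, jQ]
    simp only [integral_const, probReal_univ, one_smul]
  · have h := integral_mono hi ((iG.const_mul w).const_mul (‖c‖ ^ 2))
      (fun x => mul_le_mul_of_nonneg_left
        (fisher_upper (w := w) (B := ‖c‖ ^ 2) (u := inner ℝ c x) hw0 hw1) (by positivity))
    rwa [integral_const_mul (‖c‖ ^ 2) (fun x : En n =>
      w * (Real.exp (-‖c‖ ^ 2 / 2) * Real.cosh (inner ℝ c x))), jG'] at h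

end

/-! ### Moments of the mixture -/

section
variable {n : ℕ} {w : ℝ} {c : En n}

lemma integrable_norm_sq_add (c : En n) :
    Integrable (fun x : En n => ‖x + c‖ ^ 2) (stdGauss n) := by
  simpa only [Real.rpow_two] using integrable_norm_rpow_add c (p := 2) (by norm_num)

lemma integrable_norm_sq : Integrable (fun x : En n => ‖x‖ ^ 2) (stdGauss n) := by
  simpa using integrable_norm_sq_add (0 : En n)

lemma integrable_norm_add (c : En n) :
    Integrable (fun x : En n => ‖x + c‖) (stdGauss n) := by
  simpa only [Real.rpow_one] using integrable_norm_rpow_add c (p := 1) (by norm_num)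

lemma integrable_norm_gauss : Integrable (fun x : En n => ‖x‖) (stdGauss n) := by
  simpa using integrable_norm_add (0 : En n)

lemma moment_two_gauss : moment 2 (stdGauss n) = ∫ x, ‖x‖ ^ 2 ∂(stdGauss n) := by
  simp only [moment, Real.rpow_two]

lemma moment_two_nonneg : 0 ≤ moment 2 (stdGauss n) :=
  integral_nonneg fun x => by positivity

lemma integral_norm_sq_add (c : En n) :
    ∫ x, ‖x + c‖ ^ 2 ∂(stdGauss n) = moment 2 (stdGauss n) + ‖c‖ ^ 2 := by
  have hi : Integrable (fun x : En n => 2 * (inner ℝ c x : ℝ)) (stdGauss n) := by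
    refine Integrable.const_mul ?_ 2
    refine integrable_of_le_exp (by fun_prop) 1 ‖c‖ fun x => ?_
    have h1 := abs_inner_le (c := c) x
    have h3 := Real.add_one_le_exp (‖c‖ * ‖x‖)
    rw [Real.norm_eq_abs]
    linarith
  have e : ∀ x : En n, ‖x + c‖ ^ 2 = ‖x‖ ^ 2 + (2 * inner ℝ c x + ‖c‖ ^ 2) := fun x => by
    rw [norm_add_sq_real, real_inner_comm]; ring
  simp_rw [e]
  have h2 : Integrable (fun x : En n => 2 * (inner ℝ c x : ℝ) + ‖c‖ ^ 2) (stdGauss n) :=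
    hi.add (integrable_const _)
  rw [integral_add integrable_norm_sq h2, integral_add hi (integrable_const _),
    integral_const_mul, integral_inner_gauss, moment_two_gauss]
  simp

lemma moment_mix (hw0 : 0 ≤ w) (hw1 : w ≤ 1 / 2) {p : ℝ} (hp : 0 ≤ p) :
    Integrable (fun x => ‖x‖ ^ p) (densMeasure (mixDens w c)) ∧
    moment p (densMeasure (mixDens w c))
      = (1 - w) * moment p (stdGauss n) + w * ∫ x, ‖x + c‖ ^ p ∂(stdGauss n) := by
  refine integrable_mix hw0 hw1 (h := fun x : En n => ‖x‖ ^ p) (by fun_prop) (fun x => by simp)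
    ?_ (integrable_norm_rpow_add c hp)
  simpa using integrable_norm_rpow_add (0 : En n) hp

lemma moment_two_mix (hw0 : 0 ≤ w) (hw1 : w ≤ 1 / 2) :
    moment 2 (densMeasure (mixDens w c)) = moment 2 (stdGauss n) + w * ‖c‖ ^ 2 := by
  rw [(moment_mix hw0 hw1 (by norm_num)).2]
  simp only [Real.rpow_two]
  rw [integral_norm_sq_add]
  ring

/-! ### The quadratic Wasserstein distance -/

/-- The infimum of the quadratic transport cost. -/
def cost2 (μ ν : Measure (En n)) : ENNReal :=
  ⨅ (π' : Measure (En n × En n)) (_ : IsCoupling π' μ ν),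
    ∫⁻ z, ENNReal.ofReal (‖z.1 - z.2‖ ^ (2 : ℝ)) ∂π'

lemma wasserstein_sq (μ ν : Measure (En n)) : wasserstein 2 μ ν ^ 2 = (cost2 μ ν).toReal := by
  change ((cost2 μ ν ^ (1 / (2 : ℝ))).toReal) ^ 2 = _
  rw [← ENNReal.toReal_rpow, ← Real.sqrt_eq_rpow, Real.sq_sqrt ENNReal.toReal_nonneg]

/-- Leaving the mass of `(1 - w) γ` in place and translating the two remaining pieces back by
`∓c` costs `w ‖c‖²`. -/
lemma cost2_upper (hw0 : 0 ≤ w) (hw1 : w ≤ 1 / 2) :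
    cost2 (densMeasure (mixDens w c)) (stdGauss n) ≤ ENNReal.ofReal (w * ‖c‖ ^ 2) := by
  let P : Measure (En n × En n) :=
    ENNReal.ofReal (1 - w) • (stdGauss n).map (fun x => (x, x))
      + ENNReal.ofReal (w / 2) • (stdGauss n).map (fun x => (x + c, x))
      + ENNReal.ofReal (w / 2) • (stdGauss n).map (fun x => (x + -c, x))
  have hP1 : P.map Prod.fst = densMeasure (mixDens w c) := by
    rw [densMeasure_mix hw0 hw1]
    simp only [P]
    rw [Measure.map_add _ _ measurable_fst, Measure.map_add _ _ measurable_fst,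
      Measure.map_smul, Measure.map_smul, Measure.map_smul,
      Measure.map_map measurable_fst (by fun_prop), Measure.map_map measurable_fst (by fun_prop),
      Measure.map_map measurable_fst (by fun_prop)]
    simp only [Function.comp_def, Measure.map_id']
  have hP2 : P.map Prod.snd = stdGauss n := by
    simp only [P]
    rw [Measure.map_add _ _ measurable_snd, Measure.map_add _ _ measurable_snd,
      Measure.map_smul, Measure.map_smul, Measure.map_smul,
      Measure.map_map measurable_snd (by fun_prop), Measure.map_map measurable_snd (by fun_prop),
      Measure.map_map measurable_snd (by fun_prop)]
    simp only [Function.comp_def, Measure.map_id']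
    rw [← add_smul, ← add_smul, ← ENNReal.ofReal_add (by linarith) (by linarith),
      ← ENNReal.ofReal_add (by linarith) (by linarith),
      show 1 - w + w / 2 + w / 2 = 1 by ring, ENNReal.ofReal_one, one_smul]
  have hPp : IsProbabilityMeasure P := by
    constructor
    have : P.map Prod.snd Set.univ = 1 := by rw [hP2]; exact measure_univ
    rwa [Measure.map_apply measurable_snd MeasurableSet.univ, Set.preimage_univ] at this
  refine (iInf₂_le P ⟨hPp, hP1, hP2⟩).trans (le_of_eq ?_)
  simp only [P]
  have hm : Measurable (fun z : En n × En n => ENNReal.ofReal (‖z.1 - z.2‖ ^ (2 : ℝ))) := by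
    fun_prop
  rw [lintegral_add_measure, lintegral_add_measure, lintegral_smul_measure,
    lintegral_smul_measure, lintegral_smul_measure, lintegral_map hm (by fun_prop),
    lintegral_map hm (by fun_prop), lintegral_map hm (by fun_prop)]
  simp only [sub_self, norm_zero, add_sub_cancel_left, norm_neg, Real.rpow_two, lintegral_const,
    measure_univ, mul_one, smul_eq_mul]
  rw [← ENNReal.ofReal_mul (by linarith), ← ENNReal.ofReal_mul (by linarith),
    ← ENNReal.ofReal_add (by simp) (by positivity),
    ← ENNReal.ofReal_add (by simp; positivity) (by positivity)]
  congr 1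
  ring

/-- The pointwise inequality behind the lower bound for the transport cost: with `X = ‖x‖` and
`Y = ‖y‖`, moving a point from `X` to `Y` costs almost `X² - 2RX` unless `Y` exceeds `R`. -/
lemma dual_pointwise {X Y D R ε : ℝ} (hX : 0 ≤ X) (hY : 0 ≤ Y) (hD : |X - Y| ≤ D) (hε : 0 < ε) :
    (max (X ^ 2 - 2 * R * X) 0 - ε * X ^ 2) - ε⁻¹ * max (Y - R) 0 ^ 2 ≤ D ^ 2 := by
  have h1 : (X - Y) ^ 2 ≤ D ^ 2 := by
    rw [← sq_abs]; gcongr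
  set Z := max (Y - R) 0 with hZ
  have hZ0 : 0 ≤ Z := le_max_right _ _
  have hZ1 : Y - R ≤ Z := le_max_left _ _
  have h2 : 2 * X * Z ≤ ε * X ^ 2 + ε⁻¹ * Z ^ 2 := by
    have e : ε * X ^ 2 + ε⁻¹ * Z ^ 2 - 2 * X * Z = ε * (X - ε⁻¹ * Z) ^ 2 := by
      field_simp
      ring
    nlinarith [mul_nonneg hε.le (sq_nonneg (X - ε⁻¹ * Z))]
  have h3 := mul_le_mul_of_nonneg_left hZ1 hX
  rcases max_cases (X ^ 2 - 2 * R * X) 0 with ⟨h, _⟩ | ⟨h, _⟩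
  · rw [h]; nlinarith
  · rw [h]; nlinarith [mul_nonneg hX hZ0]

/-- The constant `∫ ‖x‖² e^{‖x‖²/4} dγ` controlling Gaussian tails. -/
def tailConst (n : ℕ) : ℝ := ∫ x : En n, ‖x‖ ^ 2 * Real.exp (‖x‖ ^ 2 / 4) ∂(stdGauss n)

lemma integrable_tail :
    Integrable (fun x : En n => ‖x‖ ^ 2 * Real.exp (‖x‖ ^ 2 / 4)) (stdGauss n) := by
  refine Integrable.mono' (integrable_exp_sq (n := n) 2) (by fun_prop)
    (Eventually.of_forall fun x => ?_)
  rw [Real.norm_of_nonneg (by positivity), Real.exp_add]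
  gcongr
  simpa using rpow_le_exp (p := 2) (norm_nonneg x) (by norm_num)

lemma tail_pointwise {Y R : ℝ} (hY : 0 ≤ Y) (hR : 0 ≤ R) :
    max (Y - R) 0 ^ 2 ≤ Real.exp (-R ^ 2 / 4) * (Y ^ 2 * Real.exp (Y ^ 2 / 4)) := by
  rcases le_total Y R with h | h
  · rw [max_eq_right (by linarith)]
    have : 0 ≤ Real.exp (-R ^ 2 / 4) * (Y ^ 2 * Real.exp (Y ^ 2 / 4)) := by positivity
    simpa using this
  · rw [max_eq_left (by linarith)]
    have h1 : 1 ≤ Real.exp (-R ^ 2 / 4) * Real.exp (Y ^ 2 / 4) := by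
      rw [← Real.exp_add]
      exact Real.one_le_exp (by nlinarith)
    nlinarith [sq_nonneg Y, mul_le_mul_of_nonneg_left h1 (sq_nonneg Y)]

lemma integral_tail_le {R : ℝ} (hR : 0 ≤ R) :
    Integrable (fun x : En n => max (‖x‖ - R) 0 ^ 2) (stdGauss n) ∧
    ∫ x : En n, max (‖x‖ - R) 0 ^ 2 ∂(stdGauss n) ≤ Real.exp (-R ^ 2 / 4) * tailConst n := by
  have hi := (integrable_tail (n := n)).const_mul (Real.exp (-R ^ 2 / 4))
  have h1 : Integrable (fun x : En n => max (‖x‖ - R) 0 ^ 2) (stdGauss n) := by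
    refine Integrable.mono' hi (by fun_prop) (Eventually.of_forall fun x => ?_)
    rw [Real.norm_of_nonneg (by positivity)]
    exact tail_pointwise (norm_nonneg x) hR
  refine ⟨h1, ?_⟩
  rw [tailConst, ← integral_const_mul]
  exact integral_mono h1 hi fun x => tail_pointwise (norm_nonneg x) hR

/-- Kantorovich duality, in its easy direction, with the potentials of `dual_pointwise`. -/
lemma cost2_lower (hw0 : 0 ≤ w) (hw1 : w ≤ 1 / 2) {R ε : ℝ} (hR : 0 ≤ R) (hε : 0 < ε) :
    ENNReal.ofReal (w * (‖c‖ ^ 2 - 2 * R * (‖c‖ + ∫ x, ‖x‖ ∂(stdGauss n)))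
        - ε * (moment 2 (stdGauss n) + w * ‖c‖ ^ 2)
        - ε⁻¹ * (Real.exp (-R ^ 2 / 4) * tailConst n))
      ≤ cost2 (densMeasure (mixDens w c)) (stdGauss n) := by
  refine le_iInf₂ fun P ⟨hP, h1, h2⟩ => ?_
  simp only [Real.rpow_two]
  -- the truncated potential, integrated against the mixture
  let φ : En n → ℝ := fun x => max (‖x‖ ^ 2 - 2 * R * ‖x‖) 0
  have hφm : Measurable φ := by fun_prop
  have hle : ∀ x, |φ x| ≤ ‖x‖ ^ 2 := fun x => by
    rw [abs_of_nonneg (le_max_right _ _)]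
    exact max_le (by nlinarith [norm_nonneg x, mul_nonneg hR (norm_nonneg x)]) (by positivity)
  have iφ0 : Integrable φ (stdGauss n) :=
    Integrable.mono' integrable_norm_sq hφm.aestronglyMeasurable (Eventually.of_forall hle)
  have iφc : Integrable (fun x => φ (x + c)) (stdGauss n) :=
    Integrable.mono' (integrable_norm_sq_add c)
      (hφm.comp (measurable_add_const c)).aestronglyMeasurable
      (Eventually.of_forall fun x => hle (x + c))
  obtain ⟨iφ, jφ⟩ := integrable_mix (c := c) hw0 hw1 hφm (fun x => by simp [φ]) iφ0 iφc
  have k0 : 0 ≤ ∫ x, φ x ∂(stdGauss n) := integral_nonneg fun x => le_max_right _ _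
  have kc : moment 2 (stdGauss n) + ‖c‖ ^ 2 - 2 * R * (‖c‖ + ∫ x, ‖x‖ ∂(stdGauss n))
      ≤ ∫ x, φ (x + c) ∂(stdGauss n) := by
    have i2 : Integrable (fun x : En n => 2 * R * (‖x‖ + ‖c‖)) (stdGauss n) :=
      (integrable_norm_gauss.add (integrable_const ‖c‖)).const_mul (2 * R)
    have i1 := (integrable_norm_sq_add c).sub i2
    have h := integral_mono i1 iφc (fun x => by
      refine le_trans ?_ (le_max_left _ _)
      simp only [Pi.sub_apply]
      nlinarith [mul_le_mul_of_nonneg_left (norm_add_le x c) hR])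
    refine le_trans (le_of_eq ?_) h
    simp only [Pi.sub_apply]
    rw [integral_sub (integrable_norm_sq_add c) i2,
      integral_const_mul, integral_norm_sq_add,
      integral_add integrable_norm_gauss (integrable_const ‖c‖)]
    simp only [integral_const, probReal_univ, one_smul]
    ring
  -- second moments and tails of the two marginals
  have iX : Integrable (fun x => ‖x‖ ^ 2) (densMeasure (mixDens w c)) := by
    simpa only [Real.rpow_two] using (moment_mix (c := c) hw0 hw1 (p := 2) (by norm_num)).1
  have jX : ∫ x, ‖x‖ ^ 2 ∂(densMeasure (mixDens w c))
      = moment 2 (stdGauss n) + w * ‖c‖ ^ 2 := by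
    rw [← moment_two_mix hw0 hw1]
    simp only [moment, Real.rpow_two]
  obtain ⟨iT, jT⟩ := integral_tail_le (n := n) hR
  let Φ : En n → ℝ := fun x => φ x - ε * ‖x‖ ^ 2
  let Ψ : En n → ℝ := fun y => ε⁻¹ * max (‖y‖ - R) 0 ^ 2
  have iΦ : Integrable Φ (densMeasure (mixDens w c)) := iφ.sub (iX.const_mul ε)
  have iΨ : Integrable Ψ (stdGauss n) := iT.const_mul _
  have IΦ : Integrable (fun z : En n × En n => Φ z.1) P := by
    rw [← h1] at iΦ
    exact iΦ.comp_measurable measurable_fst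
  have IΨ : Integrable (fun z : En n × En n => Ψ z.2) P := by
    rw [← h2] at iΨ
    exact iΨ.comp_measurable measurable_snd
  have ID : Integrable (fun z : En n × En n => ‖z.1 - z.2‖ ^ 2) P := by
    have a1 : Integrable (fun z : En n × En n => ‖z.1‖ ^ 2) P := by
      rw [← h1] at iX
      exact iX.comp_measurable measurable_fst
    have a2 : Integrable (fun z : En n × En n => ‖z.2‖ ^ 2) P := by
      have := integrable_norm_sq (n := n)
      rw [← h2] at this
      exact this.comp_measurable measurable_snd
    refine Integrable.mono' ((a1.add a2).const_mul 2) (by fun_prop)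
      (Eventually.of_forall fun z => ?_)
    rw [Real.norm_of_nonneg (by positivity)]
    simp only [Pi.add_apply]
    have h := norm_sub_le z.1 z.2
    have h' := norm_nonneg (z.1 - z.2)
    nlinarith [sq_nonneg (‖z.1‖ - ‖z.2‖)]
  have eΦ : ∫ z, Φ z.1 ∂P = ∫ x, Φ x ∂(densMeasure (mixDens w c)) := by
    rw [← h1, integral_map measurable_fst.aemeasurable]
    exact (hφm.sub (by fun_prop)).aestronglyMeasurable
  have eΨ : ∫ z, Ψ z.2 ∂P = ∫ x, Ψ x ∂(stdGauss n) := by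
    rw [← h2, integral_map measurable_snd.aemeasurable]
    exact Measurable.aestronglyMeasurable (by fun_prop)
  have hmono : ∫ z, (Φ z.1 - Ψ z.2) ∂P ≤ ∫ z, ‖z.1 - z.2‖ ^ 2 ∂P :=
    integral_mono (IΦ.sub IΨ) ID fun z =>
      dual_pointwise (norm_nonneg _) (norm_nonneg _) (abs_norm_sub_norm_le z.1 z.2) hε
  rw [integral_sub IΦ IΨ, eΦ, eΨ] at hmono
  have e1 : ∫ x, Φ x ∂(densMeasure (mixDens w c))
      = ∫ x, φ x ∂(densMeasure (mixDens w c)) - ε * (moment 2 (stdGauss n) + w * ‖c‖ ^ 2) := by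
    rw [integral_sub iφ (iX.const_mul ε), integral_const_mul, jX]
  have e2 : ∫ x, Ψ x ∂(stdGauss n) ≤ ε⁻¹ * (Real.exp (-R ^ 2 / 4) * tailConst n) := by
    simp only [Ψ]
    rw [integral_const_mul]
    exact mul_le_mul_of_nonneg_left jT (by positivity)
  rw [← ofReal_integral_eq_lintegral_ofReal ID (Eventually.of_forall fun z => by positivity)]
  refine ENNReal.ofReal_le_ofReal (le_trans ?_ hmono)
  rw [e1, jφ]
  have e3 := mul_nonneg (show 0 ≤ 1 - w by linarith) k0
  have e4 := mul_le_mul_of_nonneg_left kc hw0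
  have e5 := mul_nonneg hw0 (moment_two_nonneg (n := n))
  linarith

lemma wasserstein_mix_bounds (hw0 : 0 ≤ w) (hw1 : w ≤ 1 / 2) {R ε : ℝ} (hR : 0 ≤ R)
    (hε : 0 < ε) :
    w * (‖c‖ ^ 2 - 2 * R * (‖c‖ + ∫ x, ‖x‖ ∂(stdGauss n)))
        - ε * (moment 2 (stdGauss n) + w * ‖c‖ ^ 2)
        - ε⁻¹ * (Real.exp (-R ^ 2 / 4) * tailConst n)
      ≤ wasserstein 2 (densMeasure (mixDens w c)) (stdGauss n) ^ 2 ∧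
    wasserstein 2 (densMeasure (mixDens w c)) (stdGauss n) ^ 2 ≤ w * ‖c‖ ^ 2 := by
  have hu := cost2_upper (c := c) hw0 hw1
  rw [wasserstein_sq]
  exact ⟨(ENNReal.ofReal_le_iff_le_toReal (hu.trans_lt ENNReal.ofReal_lt_top).ne).1
    (cost2_lower hw0 hw1 hR hε), ENNReal.toReal_le_of_le_ofReal (by positivity) hu⟩

end

/-! ### Choice of the parameters -/

/-- The mass of the translated part of the mixture, `(s/2) k^{-t}` for all large `k`. -/
def wSeq (s t : ℝ) (k : ℕ) : ℝ := min (1 / 2) (s / 2 * (k : ℝ) ^ (-t))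

/-- The translation vector, of squared length `4k² + m₂(γ)/2` when `e` is a unit vector. -/
def cSeq {n : ℕ} (e : En n) (k : ℕ) : En n :=
  √(4 * (k : ℝ) ^ 2 + moment 2 (stdGauss n) / 2) • e

section
variable {n : ℕ} {s t : ℝ}

lemma wSeq_nonneg (hs : 0 < s) (k : ℕ) : 0 ≤ wSeq s t k :=
  le_min (by norm_num) (by positivity)

lemma wSeq_le (k : ℕ) : wSeq s t k ≤ 1 / 2 := min_le_left _ _

lemma wSeq_eventually (ht : 0 < t) :
    ∀ᶠ k : ℕ in atTop, wSeq s t k = s / 2 * (k : ℝ) ^ (-t) := by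
  have h : Tendsto (fun k : ℕ => s / 2 * (k : ℝ) ^ (-t)) atTop (𝓝 (s / 2 * 0)) :=
    ((tendsto_rpow_neg_atTop ht).comp tendsto_natCast_atTop_atTop).const_mul _
  rw [mul_zero] at h
  filter_upwards [h.eventually_le_const (show (0 : ℝ) < 1 / 2 by norm_num)] with k hk
  exact min_eq_right hk

lemma norm_cSeq_sq {e : En n} (he : ‖e‖ = 1) (k : ℕ) :
    ‖cSeq e k‖ ^ 2 = 4 * (k : ℝ) ^ 2 + moment 2 (stdGauss n) / 2 := by
  have h := moment_two_nonneg (n := n)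
  rw [cSeq, norm_smul, he, mul_one, Real.norm_of_nonneg (Real.sqrt_nonneg _),
    Real.sq_sqrt (by positivity)]

/-! ### Entropy and deficit asymptotics -/

/-- A sequence within bounded distance of `b log k` tends to `b` once divided by `log k`. -/
lemma tendsto_div_log {a : ℕ → ℝ} {b C : ℝ}
    (h : ∀ᶠ k : ℕ in atTop, |a k - b * Real.log k| ≤ C) :
    Tendsto (fun k : ℕ => a k / Real.log k) atTop (𝓝 b) := by
  have hlog : Tendsto (fun k : ℕ => Real.log k) atTop atTop :=
    Real.tendsto_log_atTop.comp tendsto_natCast_atTop_atTop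
  rw [tendsto_iff_norm_sub_tendsto_zero]
  refine squeeze_zero' (Eventually.of_forall fun k => norm_nonneg _) ?_
    (hlog.const_div_atTop C)
  filter_upwards [h, hlog.eventually_gt_atTop 0] with k hk hl
  rw [div_sub' hl.ne', norm_div, Real.norm_eq_abs, Real.norm_of_nonneg hl.le, mul_comm (Real.log _)]
  gcongr

/-- Makes the exponentially small error terms negligible, even after multiplication by
`k^t ‖c‖²`. -/
lemma err_eventually (t A : ℝ) :
    ∀ᶠ k : ℕ in atTop, A * ((k : ℝ) ^ 2 * (k : ℝ) ^ t * Real.exp (-(k : ℝ) / 2)) ≤ 1 := by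
  have h := ((tendsto_rpow_mul_exp_neg_mul_atTop_nhds_zero (2 + t) (1 / 2) (by norm_num)).comp
    tendsto_natCast_atTop_atTop).const_mul A
  rw [mul_zero] at h
  filter_upwards [h.eventually_le_const (show (0 : ℝ) < 1 by norm_num), eventually_ge_atTop 1]
    with k hk h1
  have hK : (0 : ℝ) < k := by exact_mod_cast h1
  rw [Function.comp_apply, Real.rpow_add hK, Real.rpow_two] at hk
  rwa [show -(k : ℝ) / 2 = -(1 / 2) * k by ring]

lemma exp_norm_le {e : En n} (he : ‖e‖ = 1) {k : ℕ} (hk : 1 ≤ k) :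
    Real.exp (-‖cSeq e k‖ ^ 2 / 8) ≤ Real.exp (-(k : ℝ) / 2) := by
  have h := moment_two_nonneg (n := n)
  have hK : (1 : ℝ) ≤ k := by exact_mod_cast hk
  have h2 := norm_cSeq_sq he k
  refine Real.exp_le_exp.2 ?_
  nlinarith

lemma norm_sq_le {e : En n} (he : ‖e‖ = 1) {k : ℕ} (hk : 1 ≤ k) :
    ‖cSeq e k‖ ^ 2 ≤ (4 + moment 2 (stdGauss n) / 2) * (k : ℝ) ^ 2 := by
  have h := moment_two_nonneg (n := n)
  have hK : (1 : ℝ) ≤ k := by exact_mod_cast hk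
  rw [norm_cSeq_sq he k]
  nlinarith [mul_nonneg h (show (0 : ℝ) ≤ k ^ 2 - 1 by nlinarith)]

/-- The powers of `k` occurring in the statement, in terms of `k^{-t}`. -/
lemma rpow_facts (t : ℝ) {K : ℝ} (hK : 0 < K) :
    K ^ t * K ^ (-t) = 1 ∧ K ^ (2 - t) = K ^ 2 * K ^ (-t) ∧ K ^ (1 - t) = K * K ^ (-t) := by
  refine ⟨?_, ?_, ?_⟩
  · rw [← Real.rpow_add hK, add_neg_cancel, Real.rpow_zero]
  · rw [sub_eq_add_neg, Real.rpow_add hK, Real.rpow_two]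
  · rw [sub_eq_add_neg, Real.rpow_add hK, Real.rpow_one]

lemma relEnt_asymp (hs : 0 < s) (ht : 0 < t) {e : En n} (he : ‖e‖ = 1) :
    ∃ C : ℝ, ∀ᶠ k : ℕ in atTop,
      |(k : ℝ) ^ t * (relEnt (mixDens (wSeq s t k) (cSeq e k)) - s * (k : ℝ) ^ (2 - t))
        - -(s * t / 2) * Real.log k| ≤ C := by
  set M := moment 2 (stdGauss n) with hM
  have hM0 : 0 ≤ M := moment_two_nonneg
  refine ⟨s / 2 * |Real.log (s / 2)| + s * M / 8 + s / 2 + s / 2 * Real.log 2 + 1, ?_⟩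
  filter_upwards [wSeq_eventually (s := s) ht, err_eventually t 4, eventually_ge_atTop 1]
    with k hw herr hk
  have hK1 : (1 : ℝ) ≤ k := by exact_mod_cast hk
  have hK : (0 : ℝ) < k := by linarith
  obtain ⟨f1, f2, -⟩ := rpow_facts t hK
  have ha : 0 < (k : ℝ) ^ (-t) := by positivity
  have hb : 0 < (k : ℝ) ^ t := by positivity
  have hw0 : 0 < wSeq s t k := by rw [hw]; positivity
  obtain ⟨lo, hi⟩ := relEnt_mix_bounds (c := cSeq e k) hw0 (wSeq_le k)
  have hsq : √(wSeq s t k) ≤ 1 :=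
    Real.sqrt_le_one.2 (by linarith [wSeq_le (s := s) (t := t) k])
  have hE := exp_norm_le he hk
  have hlog : Real.log (wSeq s t k) = Real.log (s / 2) - t * Real.log k := by
    rw [hw, Real.log_mul (by positivity) ha.ne', Real.log_rpow hK]
    ring
  have hsmall : (k : ℝ) ^ t * (4 * (√(wSeq s t k) * Real.exp (-‖cSeq e k‖ ^ 2 / 8))) ≤ 1 := by
    have h1 : √(wSeq s t k) * Real.exp (-‖cSeq e k‖ ^ 2 / 8) ≤ 1 * Real.exp (-(k : ℝ) / 2) := by
      gcongr
    have h2 : (k : ℝ) ^ t * Real.exp (-(k : ℝ) / 2)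
        ≤ (k : ℝ) ^ 2 * ((k : ℝ) ^ t * Real.exp (-(k : ℝ) / 2)) :=
      le_mul_of_one_le_left (by positivity) (by nlinarith)
    nlinarith [mul_le_mul_of_nonneg_left h1 hb.le]
  rw [hlog, norm_cSeq_sq he k, ← hM] at lo hi
  rw [norm_cSeq_sq he k, ← hM] at hsmall
  have hbw : (k : ℝ) ^ t * wSeq s t k = s / 2 := by
    rw [hw]; linear_combination (s / 2) * f1
  have hbk : (k : ℝ) ^ t * (k : ℝ) ^ (2 - t) = (k : ℝ) ^ 2 := by
    rw [f2]; linear_combination (k : ℝ) ^ 2 * f1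
  have lo' := mul_le_mul_of_nonneg_left lo hb.le
  have hi' := mul_le_mul_of_nonneg_left hi hb.le
  set H := relEnt (mixDens (wSeq s t k) (cSeq e k))
  set Q := Real.log (s / 2) with hQ
  have e1 : (k : ℝ) ^ t * (-wSeq s t k + wSeq s t k *
      (Q - t * Real.log k + (4 * (k : ℝ) ^ 2 + M / 2) / 2 - Real.log 2))
      = -(s / 2) + s / 2 *
      (Q - t * Real.log k + (4 * (k : ℝ) ^ 2 + M / 2) / 2 - Real.log 2) := by
    linear_combination (-1 + (Q - t * Real.log k + (4 * (k : ℝ) ^ 2 + M / 2) / 2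
      - Real.log 2)) * hbw
  have e2 : (k : ℝ) ^ t * (wSeq s t k *
      (Q - t * Real.log k + (4 * (k : ℝ) ^ 2 + M / 2) / 2))
      = s / 2 * (Q - t * Real.log k + (4 * (k : ℝ) ^ 2 + M / 2) / 2) := by
    linear_combination (Q - t * Real.log k + (4 * (k : ℝ) ^ 2 + M / 2) / 2) * hbw
  rw [e1] at lo'
  rw [mul_add, e2] at hi'
  have e3 : (k : ℝ) ^ t * (H - s * (k : ℝ) ^ (2 - t)) = (k : ℝ) ^ t * H - s * (k : ℝ) ^ 2 := by
    linear_combination -s * hbk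
  rw [e3]
  have hl2 : 0 ≤ Real.log 2 := Real.log_nonneg (by norm_num)
  have q1 := mul_le_mul_of_nonneg_left (le_abs_self Q) (show 0 ≤ s / 2 by positivity)
  have q2 := mul_le_mul_of_nonneg_left (neg_abs_le Q) (show 0 ≤ s / 2 by positivity)
  have q3 : 0 ≤ s * M := by positivity
  have q4 : 0 ≤ s / 2 * Real.log 2 := by positivity
  rw [abs_le]
  constructor <;> linarith

lemma fisher_asymp (hs : 0 < s) (ht : 0 < t) {e : En n} (he : ‖e‖ = 1) :
    ∃ C : ℝ, ∀ᶠ k : ℕ in atTop,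
      |(k : ℝ) ^ t * (fisherInfo (mixDens (wSeq s t k) (cSeq e k)) / 2 - s * (k : ℝ) ^ (2 - t))
        - 0 * Real.log k| ≤ C := by
  set M := moment 2 (stdGauss n) with hM
  have hM0 : 0 ≤ M := moment_two_nonneg
  refine ⟨s * M / 8 + 2, ?_⟩
  filter_upwards [wSeq_eventually (s := s) ht, err_eventually t (4 + M / 2),
    eventually_ge_atTop 1] with k hw herr hk
  have hK1 : (1 : ℝ) ≤ k := by exact_mod_cast hk
  have hK : (0 : ℝ) < k := by linarith
  obtain ⟨f1, f2, -⟩ := rpow_facts t hK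
  have ha : 0 < (k : ℝ) ^ (-t) := by positivity
  have hb : 0 < (k : ℝ) ^ t := by positivity
  have hw0 : 0 < wSeq s t k := by rw [hw]; positivity
  obtain ⟨lo, hi⟩ := fisher_mix_bounds (c := cSeq e k) hw0 (wSeq_le k)
  have hw1 := wSeq_le (s := s) (t := t) k
  have hsq : √(wSeq s t k) ≤ 1 := Real.sqrt_le_one.2 (by linarith)
  have hE := exp_norm_le he hk
  have hN := norm_sq_le he hk
  rw [← hM] at hN
  set E := Real.exp (-(k : ℝ) / 2) with hEdef
  have hE0 : 0 < E := Real.exp_pos _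
  have h1 : √(wSeq s t k) * Real.exp (-‖cSeq e k‖ ^ 2 / 8) ≤ 1 * E := by gcongr
  have h2 : (wSeq s t k * Real.exp (-‖cSeq e k‖ ^ 2 / 2)) ^ 2 ≤ E := by
    have g0 : Real.exp (-‖cSeq e k‖ ^ 2 / 2) ≤ Real.exp (-‖cSeq e k‖ ^ 2 / 8) :=
      Real.exp_le_exp.2 (by nlinarith [sq_nonneg ‖cSeq e k‖])
    have g1 : wSeq s t k * Real.exp (-‖cSeq e k‖ ^ 2 / 2) ≤ 1 * E :=
      mul_le_mul (by linarith) (g0.trans hE) (Real.exp_pos _).le (by norm_num)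
    have g2 : E ≤ 1 := Real.exp_le_one_iff.2 (by linarith)
    have g3 : 0 ≤ wSeq s t k * Real.exp (-‖cSeq e k‖ ^ 2 / 2) := by positivity
    nlinarith
  have hbw : (k : ℝ) ^ t * wSeq s t k = s / 2 := by
    rw [hw]; linear_combination (s / 2) * f1
  have hbk : (k : ℝ) ^ t * (k : ℝ) ^ (2 - t) = (k : ℝ) ^ 2 := by
    rw [f2]; linear_combination (k : ℝ) ^ 2 * f1
  set I := fisherInfo (mixDens (wSeq s t k) (cSeq e k))
  have lo' : ‖cSeq e k‖ ^ 2 * (wSeq s t k) - ‖cSeq e k‖ ^ 2 * (4 * E) ≤ I := by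
    refine le_trans ?_ lo
    rw [← mul_sub]
    exact mul_le_mul_of_nonneg_left (by linarith) (sq_nonneg _)
  have lo2 : ‖cSeq e k‖ ^ 2 * wSeq s t k - (4 + M / 2) * (k : ℝ) ^ 2 * (4 * E) ≤ I :=
    le_trans (by gcongr) lo'
  have lo3 := mul_le_mul_of_nonneg_left lo2 hb.le
  have hi3 := mul_le_mul_of_nonneg_left hi hb.le
  have e1 : (k : ℝ) ^ t * (‖cSeq e k‖ ^ 2 * wSeq s t k) = s / 2 * (4 * (k : ℝ) ^ 2 + M / 2) := by
    rw [norm_cSeq_sq he k, ← hM]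
    linear_combination (4 * (k : ℝ) ^ 2 + M / 2) * hbw
  rw [mul_sub, e1] at lo3
  rw [e1] at hi3
  have e3 : (k : ℝ) ^ t * (I / 2 - s * (k : ℝ) ^ (2 - t))
      = (k : ℝ) ^ t * I / 2 - s * (k : ℝ) ^ 2 := by
    linear_combination -s * hbk
  rw [e3]
  have q3 : 0 ≤ s * M := by positivity
  rw [abs_le]
  constructor <;> linarith

/-! ### Wasserstein asymptotics -/

/-- Elementary bookkeeping: every error term in the lower bound for the transport cost is a
constant multiple of `K a r`, where `K = k`, `a = k^{-t}`, `r = √(log k)` and `N = ‖c‖`. -/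
lemma wasserstein_arith {s M m T A B K a r N W : ℝ} (hs : 0 < s) (hM0 : 0 ≤ M) (hm0 : 0 ≤ m)
    (hT0 : 0 ≤ T) (hA : 0 < A) (hB : 0 ≤ B) (hK : 1 ≤ K) (ha : 0 < a) (ha1 : a ≤ 1)
    (hr : 1 ≤ r) (hN : N ^ 2 ≤ A * K ^ 2) (hc : N ≤ A * K) (hNe : N ^ 2 = 4 * K ^ 2 + M / 2)
    (lo : s / 2 * a * (N ^ 2 - 2 * (B * r) * (N + m)) - a / K * (M + s / 2 * a * N ^ 2)
      - (a / K)⁻¹ * (a ^ 2 * T) ≤ W) (hi : W ≤ s / 2 * a * N ^ 2) :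
    |W - 2 * s * (K ^ 2 * a)|
      ≤ (s * M / 4 + s * B * (A + m) + M + s / 2 * A + T + 1) * (K * a) * r := by
  have hK0 : 0 < K := by linarith
  have hr0 : 0 < r := by linarith
  obtain ⟨U, hU⟩ : ∃ U, U = K * a * r := ⟨_, rfl⟩
  have hU0 : 0 < U := by rw [hU]; positivity
  have hKa : K * a ≤ U := hU ▸ le_mul_of_one_le_right (by positivity) hr
  have haU : a ≤ U := (le_mul_of_one_le_left ha.le hK).trans hKa
  have t1 : s / 2 * a * (2 * (B * r) * (N + m)) ≤ s * B * (A + m) * U := by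
    have h : N + m ≤ (A + m) * K := by nlinarith
    calc s / 2 * a * (2 * (B * r) * (N + m))
        ≤ s / 2 * a * (2 * (B * r) * ((A + m) * K)) := by gcongr
      _ = _ := by rw [hU]; ring
  have t2 : a / K * M ≤ M * U := by
    rw [mul_comm]
    exact mul_le_mul_of_nonneg_left ((div_le_self ha.le hK).trans haU) hM0
  have t3 : a / K * (s / 2 * a * N ^ 2) ≤ s / 2 * A * U := by
    calc a / K * (s / 2 * a * N ^ 2)
        ≤ a / K * (s / 2 * 1 * (A * K ^ 2)) := by gcongr
      _ = s / 2 * A * (K * a) := by field_simp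
      _ ≤ _ := by gcongr
  have t4 : (a / K)⁻¹ * (a ^ 2 * T) ≤ T * U := by
    calc (a / K)⁻¹ * (a ^ 2 * T) = T * (K * a) := by field_simp
      _ ≤ _ := by gcongr
  have t5 : s * M / 4 * a ≤ s * M / 4 * U := by gcongr
  have t6 : 0 ≤ s * M / 4 * a := by positivity
  have t7 : 0 ≤ s * B * (A + m) * U + M * U + s / 2 * A * U + T * U + U := by positivity
  have t8 : 0 ≤ s * M / 4 * U := by positivity
  have main : s / 2 * a * N ^ 2 = 2 * s * (K ^ 2 * a) + s * M / 4 * a := by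
    rw [hNe]; ring
  rw [mul_sub, mul_add (a / K)] at lo
  rw [mul_assoc _ (K * a) r, ← hU, abs_le]
  constructor <;> linarith

lemma wasserstein_asymp (hs : 0 < s) (ht : 0 < t) {e : En n} (he : ‖e‖ = 1) :
    ∃ C : ℝ, 0 < C ∧ ∀ᶠ k : ℕ in atTop,
      |wasserstein 2 (densMeasure (mixDens (wSeq s t k) (cSeq e k))) (stdGauss n) ^ 2
        - 2 * s * (k : ℝ) ^ (2 - t)|
          ≤ C * (k : ℝ) ^ (1 - t) * Real.log k ^ ((1 : ℝ) / 2) := by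
  obtain ⟨M, hM⟩ : ∃ M, M = moment 2 (stdGauss n) := ⟨_, rfl⟩
  have hM0 : 0 ≤ M := hM ▸ moment_two_nonneg
  obtain ⟨m, hm⟩ : ∃ m, m = ∫ x, ‖x‖ ∂(stdGauss n) := ⟨_, rfl⟩
  have hm0 : 0 ≤ m := hm ▸ integral_nonneg fun x => norm_nonneg x
  obtain ⟨T, hT⟩ : ∃ T, T = tailConst n := ⟨_, rfl⟩
  have hT0 : 0 ≤ T := hT ▸ integral_nonneg fun x => by positivity
  obtain ⟨A, hA⟩ : ∃ A, A = 4 + M / 2 := ⟨_, rfl⟩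
  have hA0 : 0 < A := by linarith
  refine ⟨s * M / 4 + s * √(8 * t) * (A + m) + M + s / 2 * A + T + 1, by positivity, ?_⟩
  filter_upwards [wSeq_eventually (s := s) ht, eventually_ge_atTop 3] with k hw hk
  have hK3 : (3 : ℝ) ≤ k := by exact_mod_cast hk
  have hK : (0 : ℝ) < k := by linarith
  obtain ⟨-, f2, f3⟩ := rpow_facts t hK
  have ha : 0 < (k : ℝ) ^ (-t) := by positivity
  have ha1 : (k : ℝ) ^ (-t) ≤ 1 := Real.rpow_le_one_of_one_le_of_nonpos (by linarith) (by linarith)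
  have hL : 1 ≤ Real.log k := by
    rw [Real.le_log_iff_exp_le hK]
    linarith [Real.exp_one_lt_d9]
  have hr : 1 ≤ √(Real.log k) := Real.one_le_sqrt.2 hL
  -- `R = √(8t log k)` makes the Gaussian tail `k^{-2t}`; `ε = k^{-1-t}` balances the other errors
  obtain ⟨lo, hi⟩ := wasserstein_mix_bounds (c := cSeq e k) (wSeq_nonneg (t := t) hs k)
    (wSeq_le k) (Real.sqrt_nonneg (8 * t * Real.log k))
    (show 0 < (k : ℝ) ^ (-t) / k by positivity)
  have hexp : Real.exp (-√(8 * t * Real.log k) ^ 2 / 4) = ((k : ℝ) ^ (-t)) ^ 2 := by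
    rw [Real.sq_sqrt (by positivity), Real.rpow_def_of_pos hK, ← Real.exp_nat_mul]
    congr 1
    push_cast
    ring
  have hN := norm_sq_le he (show 1 ≤ k by omega)
  rw [← hM, ← hA] at hN
  have hc : ‖cSeq e k‖ ≤ A * k := by
    refine (pow_le_pow_iff_left₀ (norm_nonneg _) (by positivity) two_ne_zero).1 (hN.trans ?_)
    rw [mul_pow]
    gcongr
    nlinarith
  have hNe := norm_cSeq_sq he k
  rw [← hM] at hNe
  rw [hexp, Real.sqrt_mul (by positivity), ← hM, ← hm, ← hT, hw] at lo
  rw [hw] at hi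
  rw [hw, f2, f3, ← Real.sqrt_eq_rpow]
  exact wasserstein_arith hs hM0 hm0 hT0 hA0 (Real.sqrt_nonneg _) (by linarith) ha ha1 hr hN hc
    hNe lo hi

/-! ### Moment asymptotics -/

lemma cSeq_div_tendsto (e : En n) :
    Tendsto (fun k : ℕ => (k : ℝ)⁻¹ • cSeq e k) atTop (𝓝 ((2 : ℝ) • e)) := by
  have hinv : Tendsto (fun k : ℕ => (k : ℝ)⁻¹) atTop (𝓝 0) := tendsto_inv_atTop_nhds_zero_nat
  have h1 : Tendsto (fun k : ℕ => √(4 + moment 2 (stdGauss n) / 2 * ((k : ℝ)⁻¹) ^ 2)) atTop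
      (𝓝 √(4 + moment 2 (stdGauss n) / 2 * 0 ^ 2)) :=
    (((hinv.pow 2).const_mul _).const_add 4).sqrt
  rw [show (4 : ℝ) + moment 2 (stdGauss n) / 2 * 0 ^ 2 = 2 ^ 2 by norm_num,
    Real.sqrt_sq (by norm_num)] at h1
  refine (h1.smul_const e).congr' ?_
  filter_upwards [eventually_ge_atTop 1] with k hk
  have hK : (0 : ℝ) < k := by exact_mod_cast hk
  rw [cSeq, smul_smul]
  congr 1
  rw [← Real.sqrt_sq (inv_nonneg.2 hK.le), ← Real.sqrt_mul (by positivity),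
    Real.sqrt_sq (inv_nonneg.2 hK.le)]
  congr 1
  field_simp

lemma integral_norm_rpow_tendsto {e : En n} (he : ‖e‖ = 1) {p : ℝ} (hp : 1 ≤ p) :
    Tendsto (fun k : ℕ => ∫ x, ((k : ℝ)⁻¹ * ‖x + cSeq e k‖) ^ p ∂(stdGauss n)) atTop
      (𝓝 (2 ^ p)) := by
  have hp0 : 0 ≤ p := by linarith
  have hlim : (2 : ℝ) ^ p = ∫ _x : En n, (2 : ℝ) ^ p ∂(stdGauss n) := by simp
  rw [hlim]
  refine tendsto_integral_filter_of_dominated_convergence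
    (fun x : En n => Real.exp (p * 3) * Real.exp (p * ‖x‖)) ?_ ?_ ?_ ?_
  · exact Eventually.of_forall fun k =>
      (Continuous.rpow_const (by fun_prop) fun _ => Or.inr hp0).aestronglyMeasurable
  · have h3 : ∀ᶠ k : ℕ in atTop, ‖(k : ℝ)⁻¹ • cSeq e k‖ ≤ 3 := by
      refine (cSeq_div_tendsto e).norm.eventually_le_const ?_
      rw [norm_smul, he]; norm_num
    filter_upwards [h3, eventually_ge_atTop 1] with k hk h1
    refine Eventually.of_forall fun x => ?_
    have hK : (1 : ℝ) ≤ k := by exact_mod_cast h1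
    have hi0 : 0 ≤ (k : ℝ)⁻¹ := by positivity
    have hi1 : (k : ℝ)⁻¹ ≤ 1 := inv_le_one_of_one_le₀ hK
    rw [norm_smul, Real.norm_of_nonneg hi0] at hk
    rw [Real.norm_of_nonneg (by positivity), ← Real.exp_add]
    refine (rpow_le_exp (by positivity) hp0).trans (Real.exp_le_exp.2 ?_)
    rw [← mul_add]
    refine mul_le_mul_of_nonneg_left ?_ hp0
    have := mul_le_mul_of_nonneg_left (norm_add_le x (cSeq e k)) hi0
    nlinarith [norm_nonneg x]
  · refine integrable_of_le_exp (by fun_prop) (Real.exp (p * 3)) p fun x => ?_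
    rw [Real.norm_of_nonneg (by positivity)]
  · refine Eventually.of_forall fun x => ?_
    have hinv : Tendsto (fun k : ℕ => (k : ℝ)⁻¹) atTop (𝓝 0) := tendsto_inv_atTop_nhds_zero_nat
    have h := ((hinv.smul_const x).add (cSeq_div_tendsto e)).norm
    rw [zero_smul, zero_add, norm_smul, he, mul_one, Real.norm_of_nonneg (by norm_num)] at h
    refine (h.rpow_const (Or.inr hp0)).congr fun k => ?_
    rw [← smul_add, norm_smul, Real.norm_of_nonneg (by positivity)]

/-- The limit in the moment asymptotics exists and equals `2^{p-1} s`, which lies between the two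
bounds claimed for the lower and the upper limit. -/
lemma moment_asymp (hs : 0 < s) (ht : 0 < t) {e : En n} (he : ‖e‖ = 1) {p : ℝ} (hp : 1 ≤ p) :
    Tendsto (fun k : ℕ => (k : ℝ) ^ (t - p) *
      (moment p (densMeasure (mixDens (wSeq s t k) (cSeq e k))) - moment p (stdGauss n)))
      atTop (𝓝 (s * 2 ^ (p - 1))) := by
  have hp0 : 0 ≤ p := by linarith
  have h0 : Tendsto (fun k : ℕ => (k : ℝ) ^ (-p)) atTop (𝓝 0) :=
    (tendsto_rpow_neg_atTop (by linarith)).comp tendsto_natCast_atTop_atTop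
  have h := ((integral_norm_rpow_tendsto he hp).sub
    (h0.mul_const (moment p (stdGauss n)))).const_mul (s / 2)
  have hlim : s / 2 * (2 ^ p - 0 * moment p (stdGauss n)) = s * 2 ^ (p - 1) := by
    rw [Real.rpow_sub_one (by norm_num)]; ring
  rw [hlim] at h
  refine h.congr' ?_
  filter_upwards [wSeq_eventually (s := s) ht, eventually_ge_atTop 1] with k hw hk
  have hK : (0 : ℝ) < k := by exact_mod_cast hk
  rw [(moment_mix (wSeq_nonneg hs k) (wSeq_le k) hp0).2, hw]
  have e1 : ∀ x : En n, ((k : ℝ)⁻¹ * ‖x + cSeq e k‖) ^ p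
      = (k : ℝ) ^ (-p) * ‖x + cSeq e k‖ ^ p := fun x => by
    rw [Real.mul_rpow (by positivity) (norm_nonneg _), Real.inv_rpow hK.le, Real.rpow_neg hK.le]
  simp_rw [e1]
  rw [integral_const_mul, sub_eq_add_neg t p, Real.rpow_add hK]
  obtain ⟨f1, -, -⟩ := rpow_facts t hK
  linear_combination -(s / 2 * (k : ℝ) ^ (-p) * ((∫ x, ‖x + cSeq e k‖ ^ p ∂(stdGauss n))
    - moment p (stdGauss n))) * f1

end

/-- Main example: a sequence of centered probability measures `dμ_k = f_k dγ` on `ℝⁿ`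
whose LSI deficit decays like `(st/2) k^{-t} log k` while entropy, `W₂` and moments
behave as stated. -/
theorem instability_main_example (n : ℕ) (hn : 1 ≤ n) (s t : ℝ) (hs : 0 < s) (ht : 0 < t) :
    ∃ f : ℕ → En n → ℝ,
      (∀ k, ContDiff ℝ (⊤ : ℕ∞) (f k)) ∧
      (∀ k x, 0 < f k x) ∧
      (∀ k, IsProbabilityMeasure (densMeasure (f k))) ∧
      (∀ k, IsCentered (densMeasure (f k))) ∧
      (∀ k, Integrable (fun x => ‖gradient (f k) x‖ ^ 2 / f k x) (stdGauss n)) ∧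
      (∀ k, Integrable (fun x => f k x * Real.log (f k x)) (stdGauss n)) ∧
      (∀ k, ∀ p : ℝ, 1 ≤ p → Integrable (fun x => ‖x‖ ^ p) (densMeasure (f k))) ∧
      -- (1) `δ(μ_k) = (st/2) k^{-t} log k + o(k^{-t} log k)`
      Tendsto (fun k : ℕ => (k : ℝ) ^ t * lsiDeficit (f k) / Real.log k)
        atTop (𝓝 (s * t / 2)) ∧
      -- (2) `H(μ_k) = s k^{2-t} − (st/2) k^{-t} log k + o(k^{-t} log k)`
      Tendsto (fun k : ℕ => (k : ℝ) ^ t * (relEnt (f k) - s * (k : ℝ) ^ (2 - t)) / Real.log k)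
        atTop (𝓝 (-(s * t / 2))) ∧
      -- (3) `W₂²(μ_k,γ) = 2s k^{2-t} + O(k^{1-t} (log k)^{1/2})`
      (∃ C : ℝ, 0 < C ∧ ∀ᶠ k : ℕ in atTop,
        |wasserstein 2 (densMeasure (f k)) (stdGauss n) ^ 2 - 2 * s * (k : ℝ) ^ (2 - t)|
          ≤ C * (k : ℝ) ^ (1 - t) * Real.log k ^ ((1 : ℝ) / 2)) ∧
      -- (4) `m₂(μ_k) − m₂(γ) = 2s k^{2-t} + (s/4) m₂(γ) k^{-t} + o(k^{-t})`
      Tendsto (fun k : ℕ => (k : ℝ) ^ t *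
          (moment 2 (densMeasure (f k)) - moment 2 (stdGauss n) - 2 * s * (k : ℝ) ^ (2 - t)))
        atTop (𝓝 (s / 4 * moment 2 (stdGauss n))) ∧
      -- (5) two-sided moment asymptotics for all `p ∈ [1,∞)`
      (∀ p : ℝ, 1 ≤ p →
        s ≤ Filter.liminf
            (fun k : ℕ => (k : ℝ) ^ (t - p) *
              (moment p (densMeasure (f k)) - moment p (stdGauss n))) atTop ∧
        Filter.limsup
            (fun k : ℕ => (k : ℝ) ^ (t - p) *
              (moment p (densMeasure (f k)) - moment p (stdGauss n))) atTop
          ≤ 2 ^ (2 * (p - 1)) * s) := by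
  -- a unit vector exists because `1 ≤ n`
  obtain ⟨e, he⟩ : ∃ e : En n, ‖e‖ = 1 := ⟨EuclideanSpace.single ⟨0, hn⟩ 1, by simp⟩
  have hw0 := fun k => wSeq_nonneg (t := t) hs k
  have hw1 := fun k => wSeq_le (s := s) (t := t) k
  obtain ⟨C₁, hH⟩ := relEnt_asymp hs ht he
  obtain ⟨C₂, hI⟩ := fisher_asymp hs ht he
  have hH' := tendsto_div_log hH
  refine ⟨fun k => mixDens (wSeq s t k) (cSeq e k), fun k => mixDens_contDiff _ _,
    fun k x => mixDens_pos (hw0 k) (hw1 k) x, fun k => densMeasure_mix_isProb (hw0 k) (hw1 k),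
    fun k => densMeasure_mix_centered _ _, fun k => integrable_fisher (hw0 k) (hw1 k),
    fun k => integrable_mixDens_mul_log (hw0 k) (hw1 k),
    fun k p hp => (moment_mix (hw0 k) (hw1 k) (by linarith)).1, ?_, hH',
    wasserstein_asymp hs ht he, ?_, fun p hp => ?_⟩
  · have h := (tendsto_div_log hI).sub hH'
    rw [zero_sub, neg_neg] at h
    refine h.congr fun k => ?_
    rw [← sub_div, lsiDeficit]
    ring
  · refine tendsto_const_nhds.congr' ?_
    filter_upwards [wSeq_eventually (s := s) ht, eventually_ge_atTop 1] with k hw hk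
    have hK : (0 : ℝ) < k := by exact_mod_cast hk
    obtain ⟨f1, f2, -⟩ := rpow_facts t hK
    rw [moment_two_mix (hw0 k) (hw1 k), norm_cSeq_sq he k, hw, f2]
    linear_combination -(s / 4 * moment 2 (stdGauss n)) * f1
  · have h := moment_asymp hs ht he hp
    have h1 : (1 : ℝ) ≤ 2 ^ (p - 1) := Real.one_le_rpow (by norm_num) (by linarith)
    rw [h.liminf_eq, h.limsup_eq]
    refine ⟨le_mul_of_one_le_right hs.le h1, ?_⟩
    rw [mul_comm]
    gcongr
    · norm_num
    · linarith
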